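/- arXiv:2512.14371 — 2 statements merged into one kernel-verified Lean document; each statement's English description precedes it below -/
import Mathlib

section
/- Let K be a linearly ordered continuum and κ an infinite cardinal. Then there exists a family of 2^κ pairwise non-homeomorphic compact linearly ordered topological spaces Y such that each Y has exactly κ connected components, every connected component of each Y is homeomorphic to K, and consequently w(Y) = max{κ, w(K)}, ŵ(Y) = ŵ(K), and |Y| = max{κ, |K|}. -/
/-!
The spaces are lexicographic products `Blowup X K`, in which every point of a compact linear order
`X` with `κ` points is replaced by a copy of `K`. If any two points of `X` are separated by a jump
(`HasJumps`), then `X` is totally disconnected, so the copies of `K` are exactly the components of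
`Blowup X K`, and `X` is the space of components. This gives the number and the type of the
components, the cardinality, the weight (`Blowup.wt_eq`) and the least weight of a nonempty open
set (`Blowup.hatWt_eq`).

It remains to find `2 ^ κ` base orders `X` whose blow-ups are not homeomorphic. A homeomorphism of
blow-ups permutes the components, hence descends to a homeomorphism of the bases. It also preserves
the number of frontier points of each component, so it preserves the points of the base that are
limits from both sides (`Blowup.exists_homeomorph_base`). For a set `S` of ordinals below `κ.ord`,
let `X` be the ordinal `ω ^ κ.ord + 1` in which a decreasing sequence of type `ω*` has been inserted
immediately after `ω ^ (1 + α)` for each `α ∈ S` (`Base` and `marks`). The inserted points are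
isolated, so the Cantor–Bendixson rank of a limit point is the same as in the ordinal, where it is
governed by divisibility by powers of `ω` (`Base.mem_cbDeriv_iff`). The two-sided limit points are
exactly the points `ω ^ (1 + α)` with `α ∈ S`, and they have distinct ranks, from which `α` is
recovered. Thus the blow-up determines `S` (`subset_of_homeomorph`), and there are `2 ^ κ` choices
of `S`.
-/

universe u

open Cardinal Topology

/-- The weight of a topological space: the least cardinality of a basis for its topology. -/
noncomputable def wt (X : Type u) [TopologicalSpace X] : Cardinal.{u} :=
  sInf { c : Cardinal.{u} | ∃ B : Set (Set X), TopologicalSpace.IsTopologicalBasis B ∧ #B = c }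

/-- `hatWt X` is the smallest weight of a nonempty open subspace of `X`. -/
noncomputable def hatWt (X : Type u) [TopologicalSpace X] : Cardinal.{u} :=
  sInf { c : Cardinal.{u} | ∃ U : Set X, IsOpen U ∧ U.Nonempty ∧ wt U = c }

/-- A linearly ordered topological space: the topology is the order topology of some
linear order. -/
def IsLOTS (X : Type u) [t : TopologicalSpace X] : Prop :=
  ∃ l : LinearOrder X, @OrderTopology X t l.toPartialOrder.toPreorder

/-- A continuum: a compact connected Hausdorff space with more than one point. -/
def IsContinuum (X : Type u) [TopologicalSpace X] : Prop :=
  CompactSpace X ∧ ConnectedSpace X ∧ T2Space X ∧ Nontrivial X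

open Set

/-! ### Weights -/

lemma exists_basis_card_eq_wt (X : Type u) [TopologicalSpace X] :
    ∃ B : Set (Set X), TopologicalSpace.IsTopologicalBasis B ∧ #B = wt X :=
  csInf_mem (s := { c : Cardinal.{u} | ∃ B : Set (Set X),
    TopologicalSpace.IsTopologicalBasis B ∧ #B = c })
    ⟨_, _, TopologicalSpace.isTopologicalBasis_opens, rfl⟩

lemma wt_le_mk_basis {X : Type u} [TopologicalSpace X] {B : Set (Set X)}
    (hB : TopologicalSpace.IsTopologicalBasis B) : wt X ≤ #B :=
  csInf_le' ⟨B, hB, rfl⟩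

lemma wt_le_of_isInducing {X Y : Type u} [TopologicalSpace X] [TopologicalSpace Y] {f : X → Y}
    (hf : IsInducing f) : wt X ≤ wt Y := by
  obtain ⟨B, hB, hc⟩ := exists_basis_card_eq_wt Y
  rw [← hc]
  exact (wt_le_mk_basis (hB.isInducing hf)).trans mk_image_le

lemma exists_open_wt_eq_hatWt (X : Type u) [TopologicalSpace X] [Nonempty X] :
    ∃ U : Set X, IsOpen U ∧ U.Nonempty ∧ wt U = hatWt X :=
  csInf_mem (s := { c : Cardinal.{u} | ∃ U : Set X, IsOpen U ∧ U.Nonempty ∧ wt U = c })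
    ⟨_, univ, isOpen_univ, univ_nonempty, rfl⟩

lemma hatWt_le {X : Type u} [TopologicalSpace X] {U : Set X} (hU : IsOpen U) (hne : U.Nonempty) :
    hatWt X ≤ wt U :=
  csInf_le' ⟨U, hU, hne, rfl⟩

lemma wt_le_of_generateFrom {X : Type u} [t : TopologicalSpace X] {s : Set (Set X)}
    (hs : t = TopologicalSpace.generateFrom s) {c : Cardinal.{u}} (hc : ℵ₀ ≤ c) (hsc : #s ≤ c) :
    wt X ≤ c := by
  refine (wt_le_mk_basis (TopologicalSpace.isTopologicalBasis_of_subbasis hs)).trans ?_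
  have hsub : ((fun f : Set (Set X) => ⋂₀ f) '' { f : Set (Set X) | f.Finite ∧ f ⊆ s }) ⊆
      range (fun F : Finset s => ⋂₀ ((fun z : s => (z : Set X)) '' (F : Set s))) := by
    rintro _ ⟨f, ⟨hf, hfs⟩, rfl⟩
    have hf' : ((fun z : s => (z : Set X)) ⁻¹' f).Finite :=
      hf.preimage Subtype.val_injective.injOn
    refine ⟨hf'.toFinset, ?_⟩
    simp only [Finite.coe_toFinset]
    rw [Subtype.image_preimage_coe, inter_eq_right.2 hfs]
  refine (mk_le_mk_of_subset hsub).trans (mk_range_le.trans ?_)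
  rcases finite_or_infinite s with h | h
  · have := mk_le_aleph0 (α := Finset s)
    exact this.trans hc
  · rw [mk_finset_of_infinite]; exact hsc

/-- In a compact space, a family of open sets that separates points by disjoint members is a
subbasis: it generates a coarser Hausdorff topology, and a compact topology has no strictly coarser
Hausdorff topology. -/
lemma eq_generateFrom_of_separating {X : Type u} [t : TopologicalSpace X] [CompactSpace X]
    {s : Set (Set X)} (ho : ∀ U ∈ s, IsOpen U)
    (hsep : ∀ p q : X, p ≠ q → ∃ U ∈ s, ∃ V ∈ s, p ∈ U ∧ q ∈ V ∧ Disjoint U V) :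
    t = TopologicalSpace.generateFrom s := by
  have hle : t ≤ TopologicalSpace.generateFrom s := le_generateFrom ho
  have hT2 : @T2Space X (TopologicalSpace.generateFrom s) := by
    refine @T2Space.mk X (TopologicalSpace.generateFrom s) fun p q hpq => ?_
    obtain ⟨U, hU, V, hV, hp, hq, hd⟩ := hsep p q hpq
    exact ⟨U, V, TopologicalSpace.isOpen_generateFrom_of_mem hU,
      TopologicalSpace.isOpen_generateFrom_of_mem hV, hp, hq, hd⟩
  have hcont : @Continuous X X t (TopologicalSpace.generateFrom s) id := continuous_id_iff_le.2 hle
  have hclosed := @Continuous.isClosedMap X X t (TopologicalSpace.generateFrom s) _ hT2 id hcont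
  refine le_antisymm hle fun U hU => ?_
  have := hclosed Uᶜ (isClosed_compl_iff.2 hU)
  rw [image_id] at this
  exact (@isClosed_compl_iff X (TopologicalSpace.generateFrom s) U).1 this

lemma wt_le_of_separating {X : Type u} [TopologicalSpace X] [CompactSpace X]
    {s : Set (Set X)} (ho : ∀ U ∈ s, IsOpen U)
    (hsep : ∀ p q : X, p ≠ q → ∃ U ∈ s, ∃ V ∈ s, p ∈ U ∧ q ∈ V ∧ Disjoint U V)
    {c : Cardinal.{u}} (hc : ℵ₀ ≤ c) (hsc : #s ≤ c) : wt X ≤ c :=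
  wt_le_of_generateFrom (eq_generateFrom_of_separating ho hsep) hc hsc

/-! ### Compact linear orders -/

lemma compactSpace_of_exists_isLUB {α : Type*} [LinearOrder α] [TopologicalSpace α]
    [OrderTopology α] (h : ∀ s : Set α, ∃ a, IsLUB s a) : CompactSpace α := by
  choose f hf using h
  let : SupSet α := ⟨f⟩
  let cl : CompleteLattice α :=
    { (inferInstance : Lattice α), completeLatticeOfSup α hf with }
  let : CompleteLinearOrder α :=
    { cl, ‹LinearOrder α›, LinearOrder.toBiheytingAlgebra α with }
  infer_instance

lemma exists_isLUB_of_compactSpace {α : Type*} [LinearOrder α] [TopologicalSpace α]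
    [OrderTopology α] [CompactSpace α] [OrderBot α] (s : Set α) : ∃ a, IsLUB s a := by
  rcases s.eq_empty_or_nonempty with rfl | hs
  · exact ⟨⊥, isLUB_empty⟩
  · obtain ⟨a, -, ha⟩ := (isClosed_closure (s := s)).isCompact.exists_isLUB hs.closure
    refine ⟨a, fun x hx => ha.1 (subset_closure hx), fun b hb => ha.2 fun x hx => ?_⟩
    exact closure_minimal (t := Iic b) hb isClosed_Iic hx


/-! ### Replacing every point of a linear order by a continuum -/

/-- The lexicographic product of `X` and `K`: every point of `X` is replaced by a copy of `K`. It
carries the order topology. -/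
def Blowup (X K : Type u) : Type u := X ×ₗ K

namespace Blowup

variable {X K : Type u}

/-- The point at position `k` in the copy of `K` over `x`. -/
def mk (x : X) (k : K) : Blowup X K := toLex (x, k)

/-- The projection to the base order. -/
def fst (p : Blowup X K) : X := (ofLex p).1

/-- The position of a point in its copy of `K`. -/
def snd (p : Blowup X K) : K := (ofLex p).2

@[simp] lemma fst_mk (x : X) (k : K) : (mk x k).fst = x := rfl
@[simp] lemma snd_mk (x : X) (k : K) : (mk x k).snd = k := rfl
@[simp] lemma mk_fst_snd (p : Blowup X K) : mk p.fst p.snd = p := rfl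

@[ext] lemma ext {p q : Blowup X K} (h : p.fst = q.fst) (h' : p.snd = q.snd) : p = q := by
  rw [← mk_fst_snd p, h, h', mk_fst_snd]

lemma range_mk (x : X) : range (mk x : K → Blowup X K) = fst ⁻¹' {x} := by
  ext p
  constructor
  · rintro ⟨k, rfl⟩; rfl
  · intro h; exact ⟨p.snd, ext (Eq.symm h) rfl⟩

noncomputable instance [LinearOrder X] [LinearOrder K] : LinearOrder (Blowup X K) :=
  inferInstanceAs (LinearOrder (X ×ₗ K))

noncomputable instance [LinearOrder X] [LinearOrder K] : TopologicalSpace (Blowup X K) :=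
  Preorder.topology _

instance [LinearOrder X] [LinearOrder K] : OrderTopology (Blowup X K) := ⟨rfl⟩

variable [LinearOrder X] [LinearOrder K]

lemma lt_iff {p q : Blowup X K} :
    p < q ↔ p.fst < q.fst ∨ p.fst = q.fst ∧ p.snd < q.snd :=
  Prod.Lex.lt_iff

lemma le_iff {p q : Blowup X K} :
    p ≤ q ↔ p.fst < q.fst ∨ p.fst = q.fst ∧ p.snd ≤ q.snd :=
  Prod.Lex.le_iff

lemma fst_mono : Monotone (fst : Blowup X K → X) := fun p q h => by
  rcases le_iff.1 h with h | h
  exacts [h.le, h.1.le]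

lemma mk_strictMono (x : X) : StrictMono (mk x : K → Blowup X K) := fun _ _ h =>
  lt_iff.2 (Or.inr ⟨rfl, h⟩)

/-- The retraction of the blow-up onto its copy of `K` over `x`. -/
noncomputable def retr [BoundedOrder K] (x : X) (p : Blowup X K) : K :=
  if p.fst < x then ⊥ else if x < p.fst then ⊤ else p.snd

lemma retr_of_eq [BoundedOrder K] (p : Blowup X K) : retr p.fst p = p.snd := by
  simp [retr]

lemma exists_isLUB [BoundedOrder K] (hX : ∀ s : Set X, ∃ a, IsLUB s a)
    (hK : ∀ s : Set K, ∃ a, IsLUB s a) (s : Set (Blowup X K)) : ∃ a, IsLUB s a := by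
  obtain ⟨x, hx⟩ := hX (fst '' s)
  have hle : ∀ p ∈ s, p.fst ≤ x := fun p hp => hx.1 ⟨p, hp, rfl⟩
  obtain ⟨k, hk⟩ := hK (mk x ⁻¹' s)
  refine ⟨mk x k, fun p hp => ?_, fun q hq => ?_⟩
  · rcases (hle p hp).lt_or_eq with h | h
    · exact le_iff.2 (Or.inl h)
    · refine le_iff.2 (Or.inr ⟨h, hk.1 ?_⟩)
      rw [mem_preimage, ← h]; exact hp
  · have h1 : x ≤ q.fst := hx.2 (by rintro _ ⟨p, hp, rfl⟩; exact fst_mono (hq hp))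
    rcases h1.lt_or_eq with h | h
    · exact le_iff.2 (Or.inl h)
    · refine le_iff.2 (Or.inr ⟨h, hk.2 fun l hl => ?_⟩)
      rcases le_iff.1 (hq hl) with h' | h'
      · exact absurd h' (by simp [h])
      · exact h'.2

lemma preimage_Iio [OrderBot K] (x : X) : (fst ⁻¹' Iio x : Set (Blowup X K)) = Iio (mk x ⊥) := by
  ext p; simp [lt_iff]

lemma preimage_Ioi [OrderTop K] (x : X) : (fst ⁻¹' Ioi x : Set (Blowup X K)) = Ioi (mk x ⊤) := by
  ext p; simp [lt_iff]

lemma continuous_fst [TopologicalSpace X] [OrderTopology X] [BoundedOrder K] :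
    Continuous (fst : Blowup X K → X) := by
  refine OrderTopology.continuous_iff.2 fun x => ⟨?_, ?_⟩
  · rw [preimage_Ioi]; exact isOpen_Ioi
  · rw [preimage_Iio]; exact isOpen_Iio

variable [TopologicalSpace K] [OrderTopology K]

lemma isEmbedding_mk (x : X) : IsEmbedding (mk x : K → Blowup X K) := by
  refine (mk_strictMono x).isEmbedding_of_ordConnected ?_
  rw [range_mk]
  exact ordConnected_singleton.preimage_mono fst_mono

lemma continuous_retr [BoundedOrder K] (x : X) : Continuous (retr x : Blowup X K → K) := by
  refine OrderTopology.continuous_iff.2 fun k => ⟨?_, ?_⟩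
  · rcases eq_or_ne k ⊤ with rfl | hk
    · simp
    · convert! isOpen_Ioi (a := mk x k) using 1
      ext p
      have : k < ⊤ := hk.lt_top
      simp only [retr, mem_preimage, mem_Ioi, lt_iff, fst_mk, snd_mk]
      rcases lt_trichotomy p.fst x with h | h | h
      · simp [h, h.not_gt, h.ne']
      · simp [h]
      · simp [h, h.not_gt, this]
  · rcases eq_or_ne k ⊥ with rfl | hk
    · simp
    · convert! isOpen_Iio (a := mk x k) using 1
      ext p
      have : ⊥ < k := hk.bot_lt
      simp only [retr, mem_preimage, mem_Iio, lt_iff, fst_mk, snd_mk]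
      rcases lt_trichotomy p.fst x with h | h | h
      · simp [h, this]
      · simp [h]
      · simp [h, h.not_gt, h.ne']

end Blowup

/-! ### Components of a blow-up -/

/-- A point of a linear order that is a limit from both sides. -/
def TwoSided {X : Type u} [LinearOrder X] (x : X) : Prop :=
  Order.IsSuccLimit x ∧ Order.IsPredLimit x

/-- Every two points are separated by a jump. -/
def HasJumps (X : Type u) [LinearOrder X] : Prop :=
  ∀ x y : X, x < y → ∃ a b, x ≤ a ∧ a ⋖ b ∧ b ≤ y

lemma HasJumps.totallyDisconnectedSpace {X : Type u} [LinearOrder X] [TopologicalSpace X]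
    [OrderTopology X] (h : HasJumps X) : TotallyDisconnectedSpace X := by
  have hcl : ∀ a b : X, a ⋖ b → IsClopen (Iic a) := fun a b hab =>
    ⟨isClosed_Iic, by rw [← hab.Iio_eq]; exact isOpen_Iio⟩
  have : TotallySeparatedSpace X := by
    rw [totallySeparatedSpace_iff_exists_isClopen]
    intro x y hxy
    rcases hxy.lt_or_gt with hlt | hlt
    · obtain ⟨a, b, hxa, hab, hby⟩ := h x y hlt
      exact ⟨Iic a, hcl a b hab, hxa, fun hy => (hab.1.trans_le hby).not_ge hy⟩
    · obtain ⟨a, b, hya, hab, hbx⟩ := h y x hlt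
      exact ⟨(Iic a)ᶜ, (hcl a b hab).compl, fun hx => (hab.1.trans_le hbx).not_ge hx,
        fun hy => hy hya⟩
  infer_instance

namespace Blowup

variable {X X' K : Type u} [LinearOrder X] [LinearOrder X'] [LinearOrder K] [BoundedOrder K]

lemma lt_mk_bot {p : Blowup X K} {x : X} : p < mk x ⊥ ↔ p.fst < x := by simp [lt_iff]

lemma mk_top_lt {p : Blowup X K} {x : X} : mk x ⊤ < p ↔ x < p.fst := by simp [lt_iff]

lemma lt_mk_top {p : Blowup X K} {x : X} (h : p < mk x ⊤) : p.fst ≤ x := fst_mono h.le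

lemma mk_bot_lt {p : Blowup X K} {x : X} (h : mk x ⊥ < p) : x ≤ p.fst := fst_mono h.le

lemma mk_mem_interior {x : X} {k : K} (h1 : ⊥ < k) (h2 : k < ⊤) :
    mk x k ∈ interior (fst ⁻¹' {x} : Set (Blowup X K)) := by
  refine mem_interior.2 ⟨Ioo (mk x ⊥) (mk x ⊤), fun p hp => ?_, isOpen_Ioo,
    mk_strictMono x h1, mk_strictMono x h2⟩
  exact le_antisymm (lt_mk_top hp.2) (mk_bot_lt hp.1)

/-- Unless `x` is a limit from the left, only the right endpoint of the copy of `K` over `x` can be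
a frontier point of that copy. -/
lemma snd_eq_top_of_notMem_interior {p : Blowup X K} (hx : ¬ Order.IsSuccLimit p.fst)
    (hp : p ∉ interior (fst ⁻¹' {p.fst} : Set (Blowup X K))) : p.snd = ⊤ := by
  by_contra hne
  have hlt : p < mk p.fst ⊤ := lt_iff.2 (Or.inr ⟨rfl, Ne.lt_top hne⟩)
  apply hp
  by_cases hmin : IsMin p.fst
  · refine mem_interior.2 ⟨Iio (mk p.fst ⊤), fun q hq => ?_, isOpen_Iio, hlt⟩
    exact le_antisymm (lt_mk_top hq) (hmin.isBot _)
  · obtain ⟨z, hz⟩ : ∃ z, z ⋖ p.fst := by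
      by_contra! h
      exact hx ⟨hmin, fun z => h z⟩
    refine mem_interior.2 ⟨Ioo (mk z ⊤) (mk p.fst ⊤), fun q hq => ?_, isOpen_Ioo,
      mk_top_lt.2 hz.1, hlt⟩
    exact le_antisymm (lt_mk_top hq.2) (hz.ge_of_gt (mk_top_lt.1 hq.1))

lemma snd_eq_bot_of_notMem_interior {p : Blowup X K} (hx : ¬ Order.IsPredLimit p.fst)
    (hp : p ∉ interior (fst ⁻¹' {p.fst} : Set (Blowup X K))) : p.snd = ⊥ := by
  by_contra hne
  have hlt : mk p.fst ⊥ < p := lt_iff.2 (Or.inr ⟨rfl, Ne.bot_lt hne⟩)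
  apply hp
  by_cases hmax : IsMax p.fst
  · refine mem_interior.2 ⟨Ioi (mk p.fst ⊥), fun q hq => ?_, isOpen_Ioi, hlt⟩
    exact le_antisymm (hmax.isTop _) (mk_bot_lt hq)
  · obtain ⟨z, hz⟩ : ∃ z, p.fst ⋖ z := by
      by_contra! h
      exact hx ⟨hmax, fun z => h z⟩
    refine mem_interior.2 ⟨Ioo (mk p.fst ⊥) (mk z ⊥), fun q hq => ?_, isOpen_Ioo, hlt,
      lt_mk_bot.2 hz.1⟩
    exact le_antisymm (hz.le_of_lt (lt_mk_bot.1 hq.2)) (mk_bot_lt hq.1)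

lemma mk_bot_notMem_interior {x : X} (hx : Order.IsSuccLimit x) :
    mk x ⊥ ∉ interior (fst ⁻¹' {x} : Set (Blowup X K)) := by
  intro h
  obtain ⟨z, hz⟩ := not_isMin_iff.1 hx.1
  obtain ⟨l, hl, hsub⟩ := exists_Ioc_subset_of_mem_nhds (mem_interior_iff_mem_nhds.1 h)
    ⟨mk z ⊥, lt_mk_bot.2 hz⟩
  obtain ⟨w, hw1, hw2⟩ := (not_covBy_iff (lt_mk_bot.1 hl)).1 (hx.2 _)
  have : mk w ⊥ ∈ Ioc l (mk x (⊥ : K)) := ⟨lt_iff.2 (Or.inl hw1), (lt_mk_bot.2 hw2).le⟩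
  exact hw2.ne (hsub this)

lemma mk_top_notMem_interior {x : X} (hx : Order.IsPredLimit x) :
    mk x ⊤ ∉ interior (fst ⁻¹' {x} : Set (Blowup X K)) := by
  intro h
  obtain ⟨z, hz⟩ := not_isMax_iff.1 hx.1
  obtain ⟨l, hl, hsub⟩ := exists_Ico_subset_of_mem_nhds (mem_interior_iff_mem_nhds.1 h)
    ⟨mk z ⊤, mk_top_lt.2 hz⟩
  obtain ⟨w, hw1, hw2⟩ := (not_covBy_iff (mk_top_lt.1 hl)).1 (hx.2 _)
  have : mk w ⊤ ∈ Ico (mk x (⊤ : K)) l := ⟨(mk_top_lt.2 hw1).le, lt_iff.2 (Or.inl hw2)⟩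
  exact hw1.ne' (hsub this)

/-- The limits from both sides are exactly the points over which the copy of `K` has two frontier
points. This makes them visible in the topology of the blow-up. -/
lemma twoSided_iff [Nontrivial K] {x : X} : TwoSided x ↔
    ∃ p q : Blowup X K, p ≠ q ∧ p.fst = x ∧ q.fst = x ∧
      p ∉ interior (fst ⁻¹' {x} : Set (Blowup X K)) ∧
      q ∉ interior (fst ⁻¹' {x} : Set (Blowup X K)) := by
  constructor
  · rintro ⟨h1, h2⟩
    refine ⟨mk x ⊥, mk x ⊤, fun h => ?_, rfl, rfl, mk_bot_notMem_interior h1,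
      mk_top_notMem_interior h2⟩
    exact bot_ne_top (congrArg snd h)
  · rintro ⟨p, q, hne, rfl, hqp, hp, hq⟩
    constructor
    · by_contra h
      refine hne (ext hqp.symm ?_)
      rw [snd_eq_top_of_notMem_interior h hp, snd_eq_top_of_notMem_interior (hqp ▸ h) (hqp ▸ hq)]
    · by_contra h
      refine hne (ext hqp.symm ?_)
      rw [snd_eq_bot_of_notMem_interior h hp, snd_eq_bot_of_notMem_interior (hqp ▸ h) (hqp ▸ hq)]

lemma isQuotientMap_fst [CompactSpace (Blowup X K)] [TopologicalSpace X] [OrderTopology X] :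
    IsQuotientMap (fst : Blowup X K → X) :=
  continuous_fst.isClosedMap.isQuotientMap continuous_fst fun x => ⟨mk x ⊥, rfl⟩

variable [TopologicalSpace X] [OrderTopology X] [TopologicalSpace X'] [OrderTopology X']
  [TopologicalSpace K] [OrderTopology K] [ConnectedSpace K]

lemma connectedComponent_eq (hX : HasJumps X) (p : Blowup X K) :
    connectedComponent p = fst ⁻¹' {p.fst} := by
  have := hX.totallyDisconnectedSpace
  refine Subset.antisymm (fun q hq => ?_) ?_
  · have h1 := continuous_fst.image_connectedComponent_subset p (mem_image_of_mem fst hq)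
    rw [connectedComponent_eq_singleton] at h1
    exact h1
  · rw [← range_mk]
    exact (isPreconnected_range (isEmbedding_mk p.fst).continuous).subset_connectedComponent
      ⟨p.snd, rfl⟩

lemma fst_eq_fst_iff (hX : HasJumps X) {p q : Blowup X K} :
    p.fst = q.fst ↔ connectedComponent p = connectedComponent q := by
  refine ⟨fun h => by rw [connectedComponent_eq hX, connectedComponent_eq hX, h], fun h => ?_⟩
  have : p ∈ connectedComponent q := h ▸ mem_connectedComponent
  rwa [connectedComponent_eq hX] at this

lemma nonempty_connectedComponent_homeomorph (hX : HasJumps X) (p : Blowup X K) :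
    Nonempty (connectedComponent p ≃ₜ K) := by
  rw [connectedComponent_eq hX, ← range_mk]
  exact ⟨(isEmbedding_mk p.fst).toHomeomorph.symm⟩

lemma mk_connectedComponents (hX : HasJumps X) : #(ConnectedComponents (Blowup X K)) = #X := by
  have := hX.totallyDisconnectedSpace
  refine mk_congr (Equiv.ofBijective
    (continuous_fst (X := X) (K := K)).connectedComponentsLift
    ⟨?_, fun x => ⟨(mk x ⊥ : Blowup X K), rfl⟩⟩)
  intro a b hab
  obtain ⟨p, rfl⟩ := ConnectedComponents.surjective_coe a
  obtain ⟨q, rfl⟩ := ConnectedComponents.surjective_coe b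
  exact ConnectedComponents.coe_eq_coe.2 ((fst_eq_fst_iff hX).1 hab)

/-- A homeomorphism of blow-ups permutes the components, so it descends to the bases, and it
preserves the number of frontier points of components. -/
lemma exists_homeomorph_base [Nontrivial K] [CompactSpace (Blowup X K)]
    [CompactSpace (Blowup X' K)] (hX : HasJumps X) (hX' : HasJumps X')
    (h : Blowup X K ≃ₜ Blowup X' K) :
    ∃ φ : X ≃ₜ X', ∀ x, TwoSided x → TwoSided (φ x) := by
  have key : ∀ p q : Blowup X K, p.fst = q.fst ↔ (h p).fst = (h q).fst := fun p q => by
    rw [fst_eq_fst_iff hX, fst_eq_fst_iff hX', ← connectedComponentIn_univ,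
      ← connectedComponentIn_univ, ← connectedComponentIn_univ, ← connectedComponentIn_univ,
      ← h.surjective.range_eq, ← image_univ, ← h.image_connectedComponentIn (mem_univ p),
      ← h.image_connectedComponentIn (mem_univ q), h.injective.image_injective.eq_iff]
  have hφ : ∀ p : Blowup X K, (h (mk p.fst ⊥)).fst = (h p).fst := fun p => (key _ _).1 rfl
  have hψ : ∀ p : Blowup X' K, (h.symm (mk p.fst ⊥)).fst = (h.symm p).fst := fun p => by
    rw [key]; simp
  let φ : X ≃ₜ X' :=
    { toFun := fun x => (h (mk x ⊥)).fst
      invFun := fun x => (h.symm (mk x ⊥)).fst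
      left_inv := fun x => by simp only [hψ]; simp
      right_inv := fun x => by simp only [hφ]; simp
      continuous_toFun := by
        rw [(isQuotientMap_fst (X := X) (K := K)).continuous_iff]
        exact (continuous_fst.comp h.continuous).congr fun p => (hφ p).symm
      continuous_invFun := by
        rw [(isQuotientMap_fst (X := X') (K := K)).continuous_iff]
        exact (continuous_fst.comp h.symm.continuous).congr fun p => (hψ p).symm }
  have hφ' : ∀ p : Blowup X K, φ p.fst = (h p).fst := hφ
  have hfib : ∀ x, (fst ⁻¹' {x} : Set (Blowup X K)) = h ⁻¹' (fst ⁻¹' {φ x}) := fun x => by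
    ext p
    simp [← hφ']
  refine ⟨φ, fun x hx => ?_⟩
  obtain ⟨p, q, hne, hp, hq, hpi, hqi⟩ := (twoSided_iff (K := K)).1 hx
  rw [hfib, ← h.preimage_interior] at hpi hqi
  exact twoSided_iff.2 ⟨h p, h q, h.injective.ne hne, by rw [← hφ', hp], by rw [← hφ', hq],
    hpi, hqi⟩

end Blowup

/-! ### Weight and cardinality of a blow-up -/

namespace Blowup

lemma mk_eq (X K : Type u) : #(Blowup X K) = #X * #K := by
  rw [mul_def]; rfl

variable {X K : Type u} [LinearOrder X] [LinearOrder K] [BoundedOrder K]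
  [TopologicalSpace K] [OrderTopology K]

lemma compactSpace [CompactSpace K] (hX : ∀ s : Set X, ∃ a, IsLUB s a) :
    CompactSpace (Blowup X K) :=
  compactSpace_of_exists_isLUB (exists_isLUB hX exists_isLUB_of_compactSpace)

/-- A continuum has no isolated points, so a nonempty open set is not exhausted by the two
endpoints. -/
lemma _root_.exists_mem_open_between [ConnectedSpace K] [Nontrivial K] {U : Set K}
    (hU : IsOpen U) (hne : U.Nonempty) : (U ∩ Ioo ⊥ ⊤).Nonempty := by
  obtain ⟨x, hx⟩ := hne
  have hinf := infinite_of_mem_nhds x (hU.mem_nhds hx)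
  obtain ⟨y, hyU, hy⟩ := hinf.exists_notMem_finset ({⊥, ⊤} : Finset K)
  simp only [Finset.mem_insert, Finset.mem_singleton, not_or] at hy
  exact ⟨y, hyU, Ne.bot_lt hy.1, Ne.lt_top hy.2⟩

lemma isOpen_image_mk (x : X) {U : Set K} (hU : IsOpen U) (hU' : U ⊆ Ioo ⊥ ⊤) :
    IsOpen (mk x '' U) := by
  have : mk x '' U = retr x ⁻¹' U ∩ Ioo (mk x ⊥) (mk x ⊤) := by
    ext p
    constructor
    · rintro ⟨k, hk, rfl⟩
      refine ⟨?_, mk_strictMono x (hU' hk).1, mk_strictMono x (hU' hk).2⟩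
      simpa [retr] using hk
    · rintro ⟨h1, h2, h3⟩
      obtain rfl : p.fst = x := le_antisymm (lt_mk_top h3) (mk_bot_lt h2)
      rw [mem_preimage, retr_of_eq] at h1
      exact ⟨p.snd, h1, rfl⟩
  rw [this]
  exact (hU.preimage (continuous_retr x)).inter isOpen_Ioo

lemma hatWt_eq [ConnectedSpace K] [Nontrivial K] [Nonempty X] :
    hatWt (Blowup X K) = hatWt K := by
  have : Nonempty (Blowup X K) := ⟨mk (Classical.arbitrary X) ⊥⟩
  apply le_antisymm
  · obtain ⟨U, hU, hne, hwt⟩ := exists_open_wt_eq_hatWt K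
    let x : X := Classical.arbitrary X
    have hU' : IsOpen (U ∩ Ioo ⊥ ⊤) := hU.inter isOpen_Ioo
    rw [← hwt]
    calc hatWt (Blowup X K) ≤ wt (mk x '' (U ∩ Ioo ⊥ ⊤)) :=
          hatWt_le (isOpen_image_mk x hU' inter_subset_right)
            ((exists_mem_open_between hU hne).image _)
      _ ≤ wt (U ∩ Ioo ⊥ ⊤ : Set K) :=
          wt_le_of_isInducing ((isEmbedding_mk x).homeomorphImage _).symm.isInducing
      _ ≤ wt U := wt_le_of_isInducing (IsEmbedding.inclusion inter_subset_left).isInducing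
  · obtain ⟨V, hV, ⟨p, hp⟩, hwt⟩ := exists_open_wt_eq_hatWt (Blowup X K)
    have hc := (isEmbedding_mk (K := K) p.fst).continuous
    rw [← hwt]
    refine (hatWt_le (hV.preimage hc) ⟨p.snd, hp⟩).trans ?_
    exact wt_le_of_isInducing ((isEmbedding_mk p.fst).isInducing.restrictPreimage V)

/-- The copies of `K` have nonempty, pairwise disjoint interiors. -/
lemma mk_le_wt [ConnectedSpace K] [Nontrivial K] : #X ≤ wt (Blowup X K) := by
  obtain ⟨B, hB, hc⟩ := exists_basis_card_eq_wt (Blowup X K)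
  rw [← hc]
  have hex : ∀ x : X, ∃ U ∈ B, U.Nonempty ∧ U ⊆ fst ⁻¹' {x} := fun x => by
    obtain ⟨k, -, hk⟩ := exists_mem_open_between (isOpen_univ (X := K)) univ_nonempty
    obtain ⟨U, hU, hkU, hsub⟩ := hB.exists_subset_of_mem_open
      (mk_mem_interior (x := x) hk.1 hk.2) isOpen_interior
    exact ⟨U, hU, ⟨_, hkU⟩, hsub.trans interior_subset⟩
  choose U hU hne hsub using hex
  refine mk_le_of_injective (f := fun x => (⟨U x, hU x⟩ : B)) fun x y hxy => ?_
  obtain ⟨p, hp⟩ := hne x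
  have hxy' : U x = U y := congrArg Subtype.val hxy
  have h1 : p.fst = x := hsub x hp
  have h2 : p.fst = y := hsub y (hxy' ▸ hp)
  exact h1.symm.trans h2

lemma wt_eq [CompactSpace K] [ConnectedSpace K] [Nontrivial K] [Nonempty X]
    (hX : ∀ s : Set X, ∃ a, IsLUB s a) (hj : HasJumps X) (hinf : ℵ₀ ≤ #X) :
    wt (Blowup X K) = max #X (wt K) := by
  have := compactSpace (K := K) hX
  apply le_antisymm
  · obtain ⟨B, hB, hc⟩ := exists_basis_card_eq_wt K
    -- Points over different base points are separated by preimages of rays at a jump, points of the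
    -- same copy of `K` by the retraction onto that copy.
    let s : Set (Set (Blowup X K)) :=
      range (fun z : X × B => retr z.1 ⁻¹' (z.2 : Set K)) ∪
        (range (fun x : X => Iio (mk x ⊥)) ∪ range (fun x : X => Ioi (mk x ⊤)))
    refine wt_le_of_separating (s := s) ?_ ?_ (hinf.trans (le_max_left _ _)) ?_
    · rintro _ (⟨⟨x, U⟩, rfl⟩ | ⟨x, rfl⟩ | ⟨x, rfl⟩)
      · exact (hB.isOpen U.2).preimage (continuous_retr x)
      · exact isOpen_Iio
      · exact isOpen_Ioi
    · have hlt : ∀ p q : Blowup X K, p.fst < q.fst →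
          ∃ U ∈ s, ∃ V ∈ s, p ∈ U ∧ q ∈ V ∧ Disjoint U V := by
        intro p q hpq
        obtain ⟨a, b, hpa, hab, hbq⟩ := hj _ _ hpq
        refine ⟨_, Or.inr (Or.inl ⟨b, rfl⟩), _, Or.inr (Or.inr ⟨a, rfl⟩),
          lt_mk_bot.2 (hpa.trans_lt hab.1), mk_top_lt.2 (hab.1.trans_le hbq), ?_⟩
        rw [Set.disjoint_left]
        intro r hr1 hr2
        exact hab.2 (mk_top_lt.1 hr2) (lt_mk_bot.1 hr1)
      intro p q hne
      rcases lt_trichotomy p.fst q.fst with h | h | h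
      · exact hlt p q h
      · have hsne : p.snd ≠ q.snd := fun h' => hne (ext h h')
        obtain ⟨U, V, hU, hV, hpU, hqV, hd⟩ := t2_separation hsne
        obtain ⟨U', hU', hpU', hsU⟩ := hB.exists_subset_of_mem_open hpU hU
        obtain ⟨V', hV', hqV', hsV⟩ := hB.exists_subset_of_mem_open hqV hV
        refine ⟨_, Or.inl ⟨(p.fst, ⟨U', hU'⟩), rfl⟩, _, Or.inl ⟨(p.fst, ⟨V', hV'⟩), rfl⟩, ?_, ?_,
          (hd.mono hsU hsV).preimage _⟩
        · simpa [retr_of_eq] using hpU'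
        · simpa [h, retr_of_eq] using hqV'
      · obtain ⟨U, hU, V, hV, h1, h2, hd⟩ := hlt q p h
        exact ⟨V, hV, U, hU, h2, h1, hd.symm⟩
    · have hm : ℵ₀ ≤ max #X (wt K) := hinf.trans (le_max_left _ _)
      refine (mk_union_le _ _).trans (add_le_of_le hm ?_ ((mk_union_le _ _).trans
        (add_le_of_le hm ?_ ?_)))
      · refine mk_range_le.trans ?_
        rw [mk_prod, lift_id, lift_id, hc]
        exact mul_le_of_le hm (le_max_left _ _) (le_max_right _ _)
      · exact mk_range_le.trans (le_max_left _ _)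
      · exact mk_range_le.trans (le_max_left _ _)
  · exact max_le mk_le_wt
      (wt_le_of_isInducing (isEmbedding_mk (Classical.arbitrary X)).isInducing)

end Blowup

/-! ### Divisibility by powers of `ω` -/

section Ordinals

open Ordinal

/-- `γ` is a nonzero multiple of `ω ^ (1 + α)`. In an ordinal with its order topology these are the
points that survive `1 + α` Cantor–Bendixson derivatives. -/
def OmegaMult (α γ : Ordinal.{u}) : Prop := γ ≠ 0 ∧ ω ^ (1 + α) ∣ γ

lemma isSuccLimit_iff_omega_dvd {γ : Ordinal.{u}} : Order.IsSuccLimit γ ↔ γ ≠ 0 ∧ ω ∣ γ := by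
  rw [Order.isSuccLimit_iff, isSuccPrelimit_iff_omega0_dvd]; simp

lemma OmegaMult.isSuccLimit {α γ : Ordinal.{u}} (h : OmegaMult α γ) : Order.IsSuccLimit γ := by
  rw [isSuccLimit_iff_omega_dvd]
  refine ⟨h.1, dvd_trans ?_ h.2⟩
  simpa using opow_dvd_opow ω (le_self_add : 1 ≤ 1 + α)

lemma exists_omegaMult_between {α β γ ε : Ordinal.{u}} (h : OmegaMult α γ) (hβ : β < α)
    (hε : ε < γ) : ∃ δ, OmegaMult β δ ∧ ε < δ ∧ δ < γ := by
  have hpos : 0 < ω ^ (1 + β) := opow_pos _ omega0_pos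
  have hdvd : ω ^ (1 + β) * ω ∣ γ := by
    rw [← opow_succ]
    refine (opow_dvd_opow ω ?_).trans h.2
    rw [Order.succ_le_iff]
    gcongr
  obtain ⟨c, rfl⟩ := hdvd
  have hc : Order.IsSuccLimit (ω * c) := by
    rw [isSuccLimit_iff_omega_dvd]
    refine ⟨fun h0 => h.1 ?_, dvd_mul_right _ _⟩
    rw [mul_assoc, h0, mul_zero]
  rw [mul_assoc] at hε ⊢
  have hq : ε / ω ^ (1 + β) < ω * c := (lt_mul_iff_div_lt hpos.ne').1 hε
  refine ⟨ω ^ (1 + β) * Order.succ (ε / ω ^ (1 + β)), ⟨?_, dvd_mul_right _ _⟩, ?_, ?_⟩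
  · exact (mul_pos hpos (Order.bot_lt_succ _)).ne'
  · exact lt_mul_succ_div ε hpos.ne'
  · exact (mul_lt_mul_iff_right₀ hpos).2 (hc.succ_lt hq)

lemma omegaMult_of_between {α γ : Ordinal.{u}} (hγ : Order.IsSuccLimit γ)
    (h : ∀ β < α, ∀ ε < γ, ∃ δ, OmegaMult β δ ∧ ε < δ ∧ δ < γ) : OmegaMult α γ := by
  have h0 : γ ≠ 0 := hγ.ne_bot
  induction α using Ordinal.limitRecOn with
  | zero => exact ⟨h0, by simpa using (isSuccLimit_iff_omega_dvd.1 hγ).2⟩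
  | add_one β ih =>
    have hβ := ih fun β' hβ' => h β' (hβ'.trans (lt_add_one β))
    have hpos : 0 < ω ^ (1 + β) := opow_pos _ omega0_pos
    obtain ⟨q, rfl⟩ := hβ.2
    refine ⟨h0, ?_⟩
    rw [← add_assoc, opow_add, opow_one]
    refine mul_dvd_mul_left _ (isSuccPrelimit_iff_omega0_dvd.1 fun p hp => ?_)
    -- If `q` is the successor of `p`, there is no multiple of `ω ^ (1 + β)` strictly between
    -- `ω ^ (1 + β) * p` and `ω ^ (1 + β) * q`.
    obtain ⟨δ, ⟨-, d, rfl⟩, h1, h2⟩ := h β (lt_add_one β) (ω ^ (1 + β) * p)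
      ((mul_lt_mul_iff_right₀ hpos).2 hp.1)
    exact hp.2 ((mul_lt_mul_iff_right₀ hpos).1 h1) ((mul_lt_mul_iff_right₀ hpos).1 h2)
  | limit α hα ih =>
    refine ⟨h0, ?_⟩
    have hdvd : ∀ β < α, ω ^ (1 + β) ∣ γ := fun β hβ =>
      (ih β hβ fun δ hδ => h δ (hδ.trans hβ)).2
    -- The remainder of `γ` modulo `ω ^ (1 + α)` lies below some `ω ^ (1 + β)` with `β < α` and is
    -- divisible by it, hence is zero.
    have hpos : ω ^ (1 + α) ≠ 0 := (opow_pos _ omega0_pos).ne'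
    have hlim : Order.IsSuccLimit (1 + α) := isSuccLimit_add 1 hα
    have hr : γ % ω ^ (1 + α) < ω ^ (1 + α) := mod_lt _ hpos
    obtain ⟨c, hc, hrc⟩ := (lt_opow_of_isSuccLimit omega0_ne_zero hlim).1 hr
    obtain ⟨β, hβ, hcβ⟩ := (lt_add_iff hα.ne_bot).1 hc
    have hle : ω ^ c ≤ ω ^ (1 + β) := opow_le_opow_right omega0_pos hcβ
    have hd : ω ^ (1 + β) ∣ γ % ω ^ (1 + α) := by
      have h1 := hdvd β hβ
      rw [← div_add_mod γ (ω ^ (1 + α))] at h1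
      refine (dvd_add_iff ?_).1 h1
      exact (opow_dvd_opow ω (by gcongr)).mul_right _
    rw [dvd_iff_mod_eq_zero]
    by_contra hne
    exact absurd (le_of_dvd hne hd) (hrc.trans_le hle).not_ge

/-- The recursion satisfied by `OmegaMult`, which matches that of the Cantor–Bendixson derivatives
at points where accumulation takes place from the left only. -/
lemma omegaMult_iff {α γ : Ordinal.{u}} : OmegaMult α γ ↔ Order.IsSuccLimit γ ∧
    ∀ β < α, ∀ ε < γ, ∃ δ, OmegaMult β δ ∧ ε < δ ∧ δ < γ :=
  ⟨fun h => ⟨h.isSuccLimit, fun _ hβ _ hε => exists_omegaMult_between h hβ hε⟩,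
    fun h => omegaMult_of_between h.1 h.2⟩

lemma omegaMult_opow {α β : Ordinal.{u}} : OmegaMult α (ω ^ (1 + β)) ↔ α ≤ β := by
  rw [OmegaMult, opow_dvd_opow_iff one_lt_omega0, add_le_add_iff_left]
  exact and_iff_right (opow_pos _ omega0_pos).ne'

end Ordinals

/-! ### The Cantor–Bendixson derivatives -/

/-- The transfinite Cantor–Bendixson derivatives, with shifted indexing: index `α` stands for the
usual derivative of order `1 + α`, so that the derivative of index `0` already consists of the
non-isolated points only. -/
def cbDeriv (Z : Type u) [TopologicalSpace Z] (α : Ordinal.{u}) : Set Z :=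
  {x | AccPt x ⊤ ∧ ∀ β, β < α → AccPt x (Filter.principal (cbDeriv Z β))}
termination_by α

lemma mem_cbDeriv_iff {Z : Type u} [TopologicalSpace Z] {α : Ordinal.{u}} {x : Z} :
    x ∈ cbDeriv Z α ↔
      AccPt x ⊤ ∧ ∀ β < α, AccPt x (Filter.principal (cbDeriv Z β)) := by
  rw [cbDeriv]; rfl

lemma Homeomorph.accPt_map {Z Z' : Type u} [TopologicalSpace Z] [TopologicalSpace Z']
    (φ : Z ≃ₜ Z') {x : Z} {s : Set Z} {t : Set Z'} (hst : MapsTo φ s t)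
    (h : AccPt x (Filter.principal s)) : AccPt (φ x) (Filter.principal t) := by
  rw [accPt_iff_nhds] at h ⊢
  intro U hU
  obtain ⟨y, ⟨hyU, hys⟩, hne⟩ := h (φ ⁻¹' U) (φ.continuous.continuousAt hU)
  exact ⟨φ y, ⟨hyU, hst hys⟩, φ.injective.ne hne⟩

lemma Homeomorph.map_mem_cbDeriv {Z Z' : Type u} [TopologicalSpace Z] [TopologicalSpace Z']
    (φ : Z ≃ₜ Z') (α : Ordinal.{u}) {x : Z} (h : x ∈ cbDeriv Z α) : φ x ∈ cbDeriv Z' α := by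
  induction α using WellFoundedLT.induction generalizing x with
  | ind α ih =>
    rw [mem_cbDeriv_iff] at h ⊢
    refine ⟨?_, fun β hβ => φ.accPt_map (fun y hy => ih β hβ hy) (h.2 β hβ)⟩
    have := h.1
    rw [← Filter.principal_univ] at this ⊢
    exact φ.accPt_map (mapsTo_univ _ _) this

/-- An accumulation point of a linear order is a limit from at least one side. -/
lemma isSuccLimit_or_isPredLimit_of_accPt {X : Type*} [LinearOrder X] [TopologicalSpace X]
    [OrderTopology X] {x : X} (h : AccPt x ⊤) : Order.IsSuccLimit x ∨ Order.IsPredLimit x := by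
  by_contra! hx
  obtain ⟨h1, h2⟩ := hx
  have hI : Iic x ∈ 𝓝 x := by
    by_cases hm : IsMax x
    · exact Filter.mem_of_superset Filter.univ_mem fun y _ => hm.isTop y
    · obtain ⟨z, hz⟩ : ∃ z, x ⋖ z := by
        by_contra! h
        exact h2 ⟨hm, fun z => h z⟩
      rw [← hz.Iio_eq]; exact Iio_mem_nhds hz.1
  have hJ : Ici x ∈ 𝓝 x := by
    by_cases hm : IsMin x
    · exact Filter.mem_of_superset Filter.univ_mem fun y _ => hm.isBot y
    · obtain ⟨z, hz⟩ : ∃ z, z ⋖ x := by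
        by_contra! h
        exact h1 ⟨hm, fun z => h z⟩
      rw [← hz.Ioi_eq]; exact Ioi_mem_nhds hz.1
  rw [← Filter.principal_univ, accPt_iff_nhds] at h
  obtain ⟨y, ⟨hy, -⟩, hne⟩ := h _ (Filter.inter_mem hI hJ)
  exact hne (le_antisymm hy.1 hy.2)

/-! ### The base orders -/

/-- The well-order `W` in which a decreasing sequence of type `ω*` has been inserted immediately
after every point of `M`. It is realised inside the lexicographic product of `W` with the reverse
of `ℕ∞`: the point of level `∞` over `w` is `w` itself, and the points of finite level are allowed
only over `M`. It carries the order topology. -/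
def Base {W : Type u} (M : Set W) : Type u :=
  {p : W ×ₗ ℕ∞ᵒᵈ // (ofLex p).2 = ⊥ ∨ (ofLex p).1 ∈ M}

namespace Base

variable {W : Type u} {M : Set W}

/-- The point of `W` over which a point of the base order lies. -/
def pos (x : Base M) : W := (ofLex x.1).1

/-- The level of a point; level `⊥` (that is, `∞` in the reverse of `ℕ∞`) marks the original
points of `W`. -/
def lev (x : Base M) : ℕ∞ᵒᵈ := (ofLex x.1).2

/-- The copy of `w` in the base order. -/
def root (w : W) : Base M := ⟨toLex (w, ⊥), Or.inl rfl⟩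

/-- The `n`-th term of the decreasing sequence inserted after a point `w` of `M`. -/
def twig (w : W) (hw : w ∈ M) (n : ℕ) : Base M := ⟨toLex (w, OrderDual.toDual (n : ℕ∞)), Or.inr hw⟩

@[simp] lemma pos_root (w : W) : (root w : Base M).pos = w := rfl
@[simp] lemma lev_root (w : W) : (root w : Base M).lev = ⊥ := rfl
@[simp] lemma pos_twig (w : W) (hw : w ∈ M) (n : ℕ) : (twig w hw n).pos = w := rfl
@[simp] lemma lev_twig (w : W) (hw : w ∈ M) (n : ℕ) :
    (twig w hw n).lev = OrderDual.toDual (n : ℕ∞) := rfl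

lemma ext {x y : Base M} (h : x.pos = y.pos) (h' : x.lev = y.lev) : x = y :=
  Subtype.ext (congrArg toLex (Prod.ext h h'))

lemma eq_root_of_lev {x : Base M} (h : x.lev = ⊥) : x = root x.pos := ext rfl h

lemma eq_root_or_twig (x : Base M) : x = root x.pos ∨ ∃ hw n, x = twig x.pos hw n := by
  by_cases h : x.lev = ⊥
  · exact Or.inl (eq_root_of_lev h)
  · obtain ⟨n, hn⟩ := ENat.ne_top_iff_exists.1 (fun h' : OrderDual.ofDual x.lev = ⊤ => h h')
    exact Or.inr ⟨x.2.resolve_left h, n, ext rfl (congrArg OrderDual.toDual hn).symm⟩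

lemma root_injective : Function.Injective (root : W → Base M) := fun _ _ h => congrArg pos h

/-- The last point over `w`. -/
noncomputable def last (w : W) : Base M :=
  open Classical in if hw : w ∈ M then twig w hw 0 else root w

@[simp] lemma pos_last (w : W) : (last w : Base M).pos = w := by
  unfold last; split_ifs <;> rfl

lemma mk_eq (hW : ℵ₀ ≤ #W) : #(Base M) = #W := by
  refine le_antisymm ?_ (mk_le_of_injective (root_injective (M := M)))
  have h : #(Base M) ≤ #(W × ℕ∞) :=
    mk_le_of_injective (f := fun x => (x.pos, OrderDual.ofDual x.lev)) fun x y h =>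
      ext (congrArg Prod.fst h) (congrArg Prod.snd h)
  refine h.trans ?_
  rw [mk_prod, mk_eq_aleph0 ℕ∞, lift_aleph0, lift_uzero, mul_aleph0_eq hW]

variable [LinearOrder W]

noncomputable instance : LinearOrder (Base M) :=
  inferInstanceAs (LinearOrder {p : W ×ₗ ℕ∞ᵒᵈ // (ofLex p).2 = ⊥ ∨ (ofLex p).1 ∈ M})

noncomputable instance : TopologicalSpace (Base M) := Preorder.topology _

instance : OrderTopology (Base M) := ⟨rfl⟩

lemma lt_iff {x y : Base M} : x < y ↔ x.pos < y.pos ∨ x.pos = y.pos ∧ x.lev < y.lev :=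
  Prod.Lex.lt_iff (x := x.1) (y := y.1)

lemma le_iff {x y : Base M} : x ≤ y ↔ x.pos < y.pos ∨ x.pos = y.pos ∧ x.lev ≤ y.lev :=
  Prod.Lex.le_iff (x := x.1) (y := y.1)

lemma pos_mono : Monotone (pos : Base M → W) := fun p q h => by
  rcases le_iff.1 h with h | h
  exacts [h.le, h.1.le]

lemma root_lt_root {v w : W} : (root v : Base M) < root w ↔ v < w := by simp [lt_iff]

lemma root_le {w : W} {x : Base M} : root w ≤ x ↔ w ≤ x.pos := by
  rw [le_iff, le_iff_lt_or_eq (a := w)]; simp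

lemma twig_lt_twig {w : W} {hw : w ∈ M} {m n : ℕ} : twig w hw m < twig w hw n ↔ n < m := by
  rw [lt_iff]
  simp only [pos_twig, lt_irrefl, false_or, true_and, lev_twig, OrderDual.toDual_lt_toDual,
    Nat.cast_lt]

lemma root_lt_twig {w : W} {hw : w ∈ M} {n : ℕ} : root w < twig w hw n :=
  lt_iff.2 (Or.inr ⟨rfl, ENat.natCast_lt_top n⟩)

lemma le_last {x : Base M} {w : W} (h : x.pos ≤ w) : x ≤ last w := by
  rcases h.lt_or_eq with h | rfl
  · exact le_iff.2 (Or.inl (by simpa using h))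
  · unfold last
    split_ifs with hw
    · exact le_iff.2 (Or.inr ⟨rfl, (zero_le : 0 ≤ OrderDual.ofDual x.lev)⟩)
    · exact (ext rfl (x.2.resolve_right hw) : x = root x.pos).le

lemma last_covBy_root {v w : W} (h : v ⋖ w) : (last v : Base M) ⋖ root w := by
  refine ⟨lt_iff.2 (Or.inl (by simpa using h.1)), fun c h1 h2 => ?_⟩
  have h3 : v < c.pos := not_le.1 fun h' => h1.not_ge (le_last h')
  exact h2.not_ge (root_le.2 (not_lt.1 fun h' => h.2 h3 h'))

lemma twig_succ_covBy {w : W} (hw : w ∈ M) (n : ℕ) : twig w hw (n + 1) ⋖ twig w hw n := by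
  refine ⟨twig_lt_twig.2 n.lt_succ_self, fun c h1 h2 => ?_⟩
  have hc : c.pos = w := le_antisymm (pos_mono h2.le) (pos_mono h1.le)
  subst hc
  rcases eq_root_or_twig c with h | ⟨hw', m, h⟩
  · exact (h1.trans_eq h).not_gt root_lt_twig
  · have := twig_lt_twig.1 (h1.trans_eq h)
    have := twig_lt_twig.1 (h.symm.trans_lt h2)
    omega

lemma exists_isLUB (hW : ∀ s : Set W, ∃ a, IsLUB s a) (s : Set (Base M)) : ∃ a, IsLUB s a := by
  obtain ⟨w, hw⟩ := hW (pos '' s)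
  have hle : ∀ p ∈ s, p.pos ≤ w := fun p hp => hw.1 ⟨p, hp, rfl⟩
  have hl : IsLUB (lev '' {p ∈ s | p.pos = w}) (sSup (lev '' {p ∈ s | p.pos = w})) := isLUB_sSup _
  generalize sSup (lev '' {p ∈ s | p.pos = w}) = l at hl
  have hmem : l = ⊥ ∨ w ∈ M := by
    by_contra! h
    refine h.1 (le_bot_iff.1 (hl.2 ?_))
    rintro _ ⟨p, ⟨-, hp⟩, rfl⟩
    exact (p.2.resolve_right fun h' => h.2 (hp ▸ h')).le
  refine ⟨⟨toLex (w, l), hmem⟩, fun p hp => ?_, fun q hq => ?_⟩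
  · rcases (hle p hp).lt_or_eq with h | h
    · exact le_iff.2 (Or.inl h)
    · exact le_iff.2 (Or.inr ⟨h, hl.1 ⟨p, ⟨hp, h⟩, rfl⟩⟩)
  · have h1 : w ≤ q.pos := hw.2 (by rintro _ ⟨p, hp, rfl⟩; exact pos_mono (hq hp))
    rcases h1.lt_or_eq with h | h
    · exact le_iff.2 (Or.inl h)
    · refine le_iff.2 (Or.inr ⟨h, hl.2 ?_⟩)
      rintro _ ⟨p, ⟨hp, hpw⟩, rfl⟩
      rcases le_iff.1 (hq hp) with h' | h'
      · exact absurd h' (by simp [hpw, h])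
      · exact h'.2

lemma exists_covBy [WellFoundedLT W] {v w : W} (h : v < w) : ∃ u, v ⋖ u ∧ u ≤ w := by
  have hwf : WellFounded ((· < ·) : W → W → Prop) := wellFounded_lt
  refine ⟨hwf.min (Ioi v) ⟨w, h⟩, ⟨hwf.min_mem _ _, fun c h1 h2 => ?_⟩, ?_⟩
  · exact hwf.not_lt_min (Ioi v) h1 h2
  · exact not_lt.1 (hwf.not_lt_min (Ioi v) h)

lemma hasJumps [WellFoundedLT W] : HasJumps (Base M) := by
  intro x y hxy
  rcases lt_iff.1 hxy with h | ⟨h, h'⟩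
  · obtain ⟨u, hu, huy⟩ := exists_covBy h
    exact ⟨last x.pos, root u, le_last le_rfl, last_covBy_root hu, root_le.2 huy⟩
  · rcases eq_root_or_twig y with hy | ⟨hw, n, hy⟩
    · rw [hy] at h'; exact absurd h' not_lt_bot
    · refine ⟨twig y.pos hw (n + 1), twig y.pos hw n, le_iff.2 (Or.inr ⟨h, ?_⟩),
        twig_succ_covBy hw n, hy.ge⟩
      rw [hy] at h'
      have : (n : ℕ∞) < OrderDual.ofDual x.lev := h'
      show ((n + 1 : ℕ) : ℕ∞) ≤ OrderDual.ofDual x.lev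
      exact_mod_cast Order.add_one_le_of_lt this

/-- The inserted points, and the first points over successors, are not limits from the left. -/
lemma of_isSuccLimit {x : Base M} (hx : Order.IsSuccLimit x) :
    x.lev = ⊥ ∧ Order.IsSuccLimit x.pos := by
  rcases eq_root_or_twig x with h | ⟨hw, n, h⟩
  · refine ⟨by rw [h]; rfl, fun hm => hx.1 fun y hy => ?_, fun v hv => ?_⟩
    · rw [h]; exact root_le.2 (hm (pos_mono hy))
    · rw [h] at hx; exact hx.2 _ (last_covBy_root hv)
  · rw [h] at hx; exact absurd (twig_succ_covBy hw n) (hx.2 _)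

lemma isPredLimit_root {w : W} (hw : w ∈ M) : Order.IsPredLimit (root w : Base M) := by
  constructor
  · intro hm
    exact (root_lt_twig (hw := hw) (n := 0)).not_ge (hm root_lt_twig.le)
  · intro b hb
    have hb : root w ⋖ b := hb
    rcases (pos_mono hb.1.le : w ≤ b.pos).lt_or_eq with h | rfl
    · exact hb.2 (root_lt_twig (hw := hw) (n := 0)) (lt_iff.2 (Or.inl h))
    · rcases eq_root_or_twig b with h | ⟨hw', n, h⟩
      · exact hb.1.ne h.symm
      · refine hb.2 (root_lt_twig (hw := hw) (n := n + 1)) (lt_of_lt_of_eq ?_ h.symm)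
        exact twig_lt_twig.2 n.lt_succ_self

variable [WellFoundedLT W]

lemma isSuccLimit_root {w : W} (hw : Order.IsSuccLimit w) :
    Order.IsSuccLimit (root w : Base M) := by
  constructor
  · intro hm
    refine hw.1 fun v hv => ?_
    exact root_le.1 (hm (root_le.2 hv))
  · intro b hb
    have h1 : b.pos < w := not_le.1 fun h => hb.1.not_ge (root_le.2 h)
    obtain ⟨u, hu, huw⟩ := exists_covBy h1
    have huw' : u < w := huw.lt_of_ne fun h => hw.2 _ (h ▸ hu)
    have hbu : b < root u := lt_iff.2 (Or.inl hu.1)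
    exact hb.2 hbu (root_lt_root.2 huw')

/-- Limits from the right arise only from the inserted decreasing sequences. -/
lemma of_isPredLimit {x : Base M} (hx : Order.IsPredLimit x) : x.lev = ⊥ ∧ x.pos ∈ M := by
  have hlast : x ≠ last x.pos := by
    intro h
    by_cases hm : IsMax x.pos
    · exact hx.1 fun y hy => h ▸ le_last (hm (pos_mono hy))
    · obtain ⟨v, hv⟩ := not_isMax_iff.1 hm
      obtain ⟨u, hu, -⟩ := exists_covBy hv
      refine hx.2 (root u) (?_ : x ⋖ root u)
      rw [h]; exact last_covBy_root hu
  have hM : x.pos ∈ M := by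
    by_contra hM
    refine hlast ?_
    rw [last, dif_neg hM]
    exact ext rfl (x.2.resolve_right hM)
  refine ⟨?_, hM⟩
  rcases eq_root_or_twig x with h | ⟨hw, n, h⟩
  · rw [h]; rfl
  · exfalso
    cases n with
    | zero => apply hlast; simpa [last, hM] using h
    | succ n => rw [h] at hx; exact hx.2 _ (twig_succ_covBy hw n)

lemma twoSided_root {w : W} (hw : w ∈ M) (hl : Order.IsSuccLimit w) :
    TwoSided (root w : Base M) :=
  ⟨isSuccLimit_root hl, isPredLimit_root hw⟩

lemma isOpen_pos_le (w : W) : IsOpen {x : Base M | x.pos ≤ w} := by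
  by_cases hm : IsMax w
  · convert! isOpen_univ
    exact eq_univ_of_forall fun x => isTop_iff_isMax.2 hm _
  · obtain ⟨v, hv⟩ := not_isMax_iff.1 hm
    obtain ⟨u, hu, -⟩ := exists_covBy hv
    convert! isOpen_Iio (a := root u) using 1
    ext x
    rw [mem_Iio, ← not_le, root_le, not_le]
    exact hu.lt_iff_le_left.symm

/-- Accumulation at a root by a set of roots only takes place from the left, because the points
inserted after a root separate it from all later roots. -/
lemma accPt_root_iff {w : W} (hw : Order.IsSuccLimit w) (G : Set W) :
    AccPt (root w : Base M) (Filter.principal {y | y.lev = ⊥ ∧ y.pos ∈ G}) ↔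
      ∀ ε < w, ∃ δ ∈ G, ε < δ ∧ δ < w := by
  rw [accPt_iff_nhds]
  constructor
  · intro h ε hε
    obtain ⟨y, ⟨⟨hy1, hy2⟩, hy3, hy4⟩, hne⟩ := h (Ioi (root ε) ∩ {x | x.pos ≤ w})
      (Filter.inter_mem (Ioi_mem_nhds (root_lt_root.2 hε)) ((isOpen_pos_le w).mem_nhds le_rfl))
    rw [eq_root_of_lev hy3] at hy1 hne
    exact ⟨y.pos, hy4, root_lt_root.1 hy1, hy2.lt_of_ne fun h' => hne (congrArg root h')⟩
  · intro h U hU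
    obtain ⟨v, hv⟩ := not_isMin_iff.1 hw.1
    obtain ⟨l, hl, hlU⟩ := exists_Ioc_subset_of_mem_nhds hU ⟨root v, root_lt_root.2 hv⟩
    have hlw : l.pos < w := not_le.1 fun h => hl.not_ge (root_le.2 h)
    obtain ⟨δ, hδ, h1, h2⟩ := h _ hlw
    exact ⟨root δ, ⟨hlU ⟨lt_iff.2 (Or.inl h1), (root_lt_root.2 h2).le⟩, rfl, hδ⟩,
      (root_lt_root.2 h2).ne⟩

/-- The Cantor–Bendixson derivatives of the base order are those of the well-order `W`, computed by
divisibility in terms of the ordinals `f w`. -/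
lemma mem_cbDeriv_iff (f : W <i Ordinal.{u}) (hM : ∀ w ∈ M, Order.IsSuccLimit w)
    (α : Ordinal.{u}) (x : Base M) :
    x ∈ cbDeriv (Base M) α ↔ x.lev = ⊥ ∧ OmegaMult α (f x.pos) := by
  induction α using WellFoundedLT.induction generalizing x with
  | ind α ih =>
    have hset : ∀ β < α, cbDeriv (Base M) β =
        {y | y.lev = ⊥ ∧ y.pos ∈ {w | OmegaMult β (f w)}} := fun β hβ => by
      ext y; exact ih β hβ y
    have hacc : AccPt x ⊤ ↔ x.lev = ⊥ ∧ Order.IsSuccLimit x.pos := by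
      constructor
      · intro h
        rcases isSuccLimit_or_isPredLimit_of_accPt h with h | h
        · exact of_isSuccLimit h
        · exact ⟨(of_isPredLimit h).1, hM _ (of_isPredLimit h).2⟩
      · rintro ⟨h1, h2⟩
        rw [eq_root_of_lev h1]
        refine ((accPt_root_iff h2 univ).2 fun ε hε => ?_).mono le_top
        obtain ⟨u, hu, hux⟩ := exists_covBy hε
        exact ⟨u, trivial, hu.1, hux.lt_of_ne fun h => h2.2 _ (h ▸ hu)⟩
    rw [_root_.mem_cbDeriv_iff, hacc, and_assoc, omegaMult_iff, f.isSuccLimit_apply_iff]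
    refine and_congr_right fun h1 => and_congr_right fun h2 => forall₂_congr fun β hβ => ?_
    rw [hset β hβ]
    conv_lhs => rw [eq_root_of_lev h1]
    rw [accPt_root_iff h2]
    constructor
    · intro h ε hε
      obtain ⟨v, rfl⟩ := f.mem_range_of_rel hε
      obtain ⟨δ, h3, h4, h5⟩ := h v (f.lt_iff_lt.1 hε)
      exact ⟨f δ, h3, f.lt_iff_lt.2 h4, f.lt_iff_lt.2 h5⟩
    · intro h ε hε
      obtain ⟨δ, h3, h4, h5⟩ := h (f ε) (f.lt_iff_lt.2 hε)
      obtain ⟨v, rfl⟩ := f.mem_range_of_rel h5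
      exact ⟨v, h3, f.lt_iff_lt.1 h4, f.lt_iff_lt.1 h5⟩

end Base

/-! ### Rigidity and the family of spaces -/

section Family

open Ordinal

/-- The points of `W` whose ordinal value is `ω ^ (1 + α)` for some `α` in `S`. -/
def marks {W : Type u} [LinearOrder W] (f : W <i Ordinal.{u}) (S : Set Ordinal.{u}) : Set W :=
  {w | ∃ α ∈ S, f w = ω ^ (1 + α)}

lemma isSuccLimit_of_mem_marks {W : Type u} [LinearOrder W] {f : W <i Ordinal.{u}}
    {S : Set Ordinal.{u}} {w : W} (hw : w ∈ marks f S) : Order.IsSuccLimit w := by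
  obtain ⟨α, -, h⟩ := hw
  rw [← f.isSuccLimit_apply_iff, h]
  exact (omegaMult_opow.2 le_rfl).isSuccLimit

/-- The set `S` can be read off from the Cantor–Bendixson ranks of the two-sided limit points of
`Base (marks f S)`. -/
lemma subset_of_homeomorph {W : Type u} [LinearOrder W] [WellFoundedLT W] {f : W <i Ordinal.{u}}
    {S T : Set Ordinal.{u}} (hS : ∀ α ∈ S, ω ^ (1 + α) ∈ range f)
    (φ : Base (marks f S) ≃ₜ Base (marks f T)) (hφ : ∀ x, TwoSided x → TwoSided (φ x)) :
    S ⊆ T := by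
  intro α hα
  obtain ⟨w, hw⟩ := hS α hα
  have hwS : w ∈ marks f S := ⟨α, hα, hw⟩
  have h2 := hφ _ (Base.twoSided_root hwS (isSuccLimit_of_mem_marks hwS))
  obtain ⟨hlev, β, hβ, hpos⟩ := Base.of_isPredLimit h2.2
  have h3 (γ : Ordinal.{u}) : (Base.root w : Base (marks f S)) ∈ cbDeriv _ γ ↔ γ ≤ α := by
    rw [Base.mem_cbDeriv_iff f fun _ => isSuccLimit_of_mem_marks, Base.pos_root, hw,
      omegaMult_opow, Base.lev_root]
    simp
  have h4 (γ : Ordinal.{u}) : φ (Base.root w) ∈ cbDeriv _ γ ↔ γ ≤ β := by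
    rw [Base.mem_cbDeriv_iff f fun _ => isSuccLimit_of_mem_marks, hpos, omegaMult_opow, hlev]
    simp
  have h5 : α ≤ β := (h4 α).1 (φ.map_mem_cbDeriv α ((h3 α).2 le_rfl))
  have h6 : β ≤ α := (h3 β).1 <| by
    simpa using φ.symm.map_mem_cbDeriv β ((h4 β).2 le_rfl)
  rwa [h5.antisymm h6]

lemma exists_isLUB_of_orderTop {W : Type u} [LinearOrder W] [WellFoundedLT W] {t : W}
    (ht : ∀ w, w ≤ t) (s : Set W) : ∃ a, IsLUB s a := by
  have hwf : WellFounded ((· < ·) : W → W → Prop) := wellFounded_lt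
  refine ⟨hwf.min (upperBounds s) ⟨t, fun w _ => ht w⟩, hwf.min_mem _ _, fun b hb => ?_⟩
  exact not_lt.1 (hwf.not_lt_min (upperBounds s) hb)

/-- A well-order of cardinality `κ` with a last element, long enough to contain the ordinals
`ω ^ (1 + α)` for all `α < κ.ord`. -/
lemma exists_long_wellOrder (κ : Cardinal.{u}) (hκ : ℵ₀ ≤ κ) :
    ∃ (W : Type u) (_ : LinearOrder W) (_ : WellFoundedLT W) (f : W <i Ordinal.{u}),
      #W = κ ∧ (∀ s : Set W, ∃ a, IsLUB s a) ∧ ∀ α < κ.ord, ω ^ (1 + α) ∈ range f := by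
  have hω : ω ≤ κ.ord := omega0_le_ord.2 hκ
  refine ⟨(Order.succ (ω ^ κ.ord)).ToType, inferInstance, inferInstance,
    typein (α := (Order.succ (ω ^ κ.ord)).ToType) (· < ·), ?_, ?_, fun α hα => ?_⟩
  · rw [mk_toType, Order.succ_eq_add_one, card_add_one,
      card_opow_eq_of_omega0_le_right one_lt_omega0 hω, card_omega0, card_ord, max_eq_right hκ,
      add_one_eq hκ]
  · refine exists_isLUB_of_orderTop (t := ToType.mk ⟨ω ^ κ.ord, mem_Iio.2 (Order.lt_succ _)⟩) fun w => ?_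
    rw [← OrderIso.symm_apply_le]
    exact Subtype.coe_le_coe.1 (Order.lt_succ_iff.1 (mem_Iio.1 (ToType.mk.symm w).2))
  · apply typein_surj
    rw [type_toType, Order.lt_succ_iff]
    refine opow_le_opow_right omega0_pos ?_
    rcases lt_or_ge α ω with h | h
    · obtain ⟨n, rfl⟩ := lt_omega0.1 h
      rw [← Nat.cast_add_one_comm, ← Nat.cast_add_one]
      exact (natCast_lt_omega0 _).le.trans hω
    · rw [one_add_of_omega0_le h]; exact hα.le

end Family

/-- For every linearly ordered continuum `K` and every infinite cardinal `κ` there are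
`2 ^ κ` pairwise non-homeomorphic compact linearly ordered spaces with exactly `κ`
components, all homeomorphic to `K`; consequently of weight `max {κ, w(K)}`, minimal open
weight `ŵ(K)` and size `max {κ, |K|}`. -/
theorem many_compact_ordered_spaces_with_prescribed_components
    (K : TopCat.{u}) (hKc : IsContinuum ↥K) (hKo : IsLOTS ↥K)
    (κ : Cardinal.{u}) (hκ : ℵ₀ ≤ κ) :
    ∃ (ι : Type u) (Y : ι → TopCat.{u}),
      #ι = 2 ^ κ ∧
      (∀ i, CompactSpace ↥(Y i) ∧ IsLOTS ↥(Y i) ∧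
        #(ConnectedComponents ↥(Y i)) = κ ∧
        (∀ y : ↥(Y i), Nonempty (↥(connectedComponent y) ≃ₜ ↥K)) ∧
        wt ↥(Y i) = max κ (wt ↥K) ∧ hatWt ↥(Y i) = hatWt ↥K ∧
        #↥(Y i) = max κ #↥K) ∧
      (∀ i j : ι, i ≠ j → IsEmpty (↥(Y i) ≃ₜ ↥(Y j))) := by
  obtain ⟨l, hl⟩ := hKo
  obtain ⟨hcomp, hconn, -, hnt⟩ := hKc
  have hne : (univ : Set K).Nonempty := univ_nonempty
  obtain ⟨a, -, ha⟩ := isCompact_univ.exists_isLeast hne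
  obtain ⟨b, -, hb⟩ := isCompact_univ.exists_isGreatest hne
  let _ : BoundedOrder K :=
    { bot := a, bot_le := fun x => ha trivial, top := b, le_top := fun x => hb trivial }
  obtain ⟨W, _, _, f, hW, hlub, hrange⟩ := exists_long_wellOrder κ hκ
  let o : κ.ord.ToType → Ordinal.{u} := fun a => (Ordinal.ToType.mk.symm a).1
  have ho : Function.Injective o := Subtype.val_injective.comp (OrderIso.injective _)
  let X (A : Set κ.ord.ToType) : Type u := Base (marks f (o '' A))
  have hX (A) : #(X A) = κ := (Base.mk_eq (hW ▸ hκ)).trans hW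
  have hXlub (A) : ∀ s : Set (X A), ∃ a, IsLUB s a := Base.exists_isLUB hlub
  have hXjumps (A) : HasJumps (X A) := Base.hasJumps
  have hXne (A) : Nonempty (X A) := mk_ne_zero_iff.1 (by
    rw [hX A]; exact (aleph0_pos.trans_le hκ).ne')
  have hcomp' (A) : CompactSpace (Blowup (X A) K) := Blowup.compactSpace (hXlub A)
  refine ⟨Set κ.ord.ToType, fun A => TopCat.of (Blowup (X A) K), ?_, fun A => ⟨hcomp' A,
    ⟨inferInstanceAs (LinearOrder (Blowup (X A) K)),
      inferInstanceAs (OrderTopology (Blowup (X A) K))⟩, ?_, ?_, ?_, ?_, ?_⟩, ?_⟩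
  · rw [mk_set, mk_toType, card_ord]
  · exact (Blowup.mk_connectedComponents (hXjumps A)).trans (hX A)
  · exact Blowup.nonempty_connectedComponent_homeomorph (hXjumps A)
  · refine (Blowup.wt_eq (hXlub A) (hXjumps A) (hκ.trans_eq (hX A).symm)).trans ?_
    rw [hX A]
  · exact Blowup.hatWt_eq
  · refine (Blowup.mk_eq (X A) K).trans ?_
    rw [hX A, mul_eq_max_of_aleph0_le_left hκ (mk_ne_zero _)]
  · intro A B hAB
    refine ⟨fun h => hAB ?_⟩
    have key (A B : Set κ.ord.ToType) (h : Blowup (X A) K ≃ₜ Blowup (X B) K) : A ⊆ B := by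
      obtain ⟨φ, hφ⟩ := Blowup.exists_homeomorph_base (hXjumps A) (hXjumps B) h
      refine (image_subset_image_iff ho).1 (subset_of_homeomorph ?_ φ hφ)
      rintro _ ⟨a, -, rfl⟩
      exact hrange _ (Ordinal.ToType.mk.symm a).2
    exact (key A B h).antisymm (key B A h.symm)
end

section
/- There exists a family of 𝔠 pairwise non-homeomorphic compact subspaces of ℝ in which every connected component has more than one point (i.e., no connected component is a singleton). -/
/-!
A compact `A ⊆ ℝ` without singleton components is a compact countable set `T ⊆ ℝ` each of whose
points has been blown up to an interval: `A = φ ⁻¹' T` for a continuous monotone `φ` whose fibres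
over `T` are nondegenerate intervals (`exists_blowup`). These fibres are the components of `A`.

A component of `A` remembers more than the point `t` of `T` it comes from: limits of `T` at `t`
from the left accumulate at one end of the interval and limits from the right at the other end.
Hence the condition that `t` has Cantor-Bendixson rank exactly `n + 1` and is a limit from both sides
of points of rank at least `n` is a topological property of the component (`typeSet`, `typeSet_blowup`).

For every `S ⊆ ℕ` there is a compact countable `T` in which points of each rank `n + 1` exist, and
such a point is a two-sided limit exactly when `n ∈ S` (`exists_final`). It is obtained by repeatedly
letting a sequence of sets built before shrink to a point `p` (`glue`), from one side or from both.
The topological invariant of the corresponding `A` is then `S`, which gives `2 ^ ℵ₀ = 𝔠` different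
spaces.
-/

open Cardinal Topology

namespace ManyCompact

open Set

/-! ### A topological invariant -/

/-- Cantor-Bendixson derivatives of the space of components, as saturated subsets of `X`:
`compDeriv X (n + 1)` consists of the components in `compDeriv X n` that meet the closure of the
other components in `compDeriv X n`. -/
def compDeriv (X : Type*) [TopologicalSpace X] : ℕ → Set X
  | 0 => univ
  | n + 1 => {p | p ∈ compDeriv X n ∧
      ∃ q ∈ connectedComponent p, q ∈ closure (compDeriv X n \ connectedComponent p)}

/-- The set of `n` such that some component of rank exactly `n + 1` has two different points that
are limits of other components of rank at least `n`. -/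
def typeSet (X : Type*) [TopologicalSpace X] : Set ℕ :=
  {n | ∃ p ∈ compDeriv X (n + 1), p ∉ compDeriv X (n + 2) ∧
    ∃ q ∈ connectedComponent p, ∃ r ∈ connectedComponent p, q ≠ r ∧
      q ∈ closure (compDeriv X n \ connectedComponent p) ∧
      r ∈ closure (compDeriv X n \ connectedComponent p)}

section Homeo

variable {X Y : Type*} [TopologicalSpace X] [TopologicalSpace Y]

lemma mem_component_homeo (h : X ≃ₜ Y) (p q : X) :
    h q ∈ connectedComponent (h p) ↔ q ∈ connectedComponent p := by
  constructor
  · intro hq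
    have := h.symm.continuous.image_connectedComponent_subset (h p) (mem_image_of_mem _ hq)
    simpa using this
  · intro hq
    exact h.continuous.image_connectedComponent_subset p (mem_image_of_mem _ hq)

lemma mem_closure_homeo (h : X ≃ₜ Y) {B : Set X} {B' : Set Y}
    (hB : ∀ x, h x ∈ B' ↔ x ∈ B) (x : X) : h x ∈ closure B' ↔ x ∈ closure B := by
  have : B = h ⁻¹' B' := by ext x; exact (hB x).symm
  rw [this, ← h.preimage_closure]
  rfl

lemma mem_compDeriv_homeo (h : X ≃ₜ Y) (n : ℕ) (x : X) :
    h x ∈ compDeriv Y n ↔ x ∈ compDeriv X n := by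
  induction n generalizing x with
  | zero => simp [compDeriv]
  | succ n ih =>
    simp only [compDeriv, mem_ofPred_eq, h.surjective.exists]
    refine and_congr (ih x) (exists_congr fun q => and_congr (mem_component_homeo h x q) ?_)
    exact mem_closure_homeo h (fun y => and_congr (ih y) (not_congr (mem_component_homeo h x y))) q

lemma typeSet_homeo (h : X ≃ₜ Y) : typeSet Y = typeSet X := by
  ext n
  have key (p q : X) : h q ∈ closure (compDeriv Y n \ connectedComponent (h p)) ↔
      q ∈ closure (compDeriv X n \ connectedComponent p) :=
    mem_closure_homeo h (fun y => and_congr (mem_compDeriv_homeo h n y)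
      (not_congr (mem_component_homeo h p y))) q
  simp only [typeSet, mem_ofPred_eq, h.surjective.exists, mem_compDeriv_homeo, mem_component_homeo,
    key, h.injective.ne_iff]

end Homeo

/-! ### Derivatives of subsets of the line -/

/-- The Cantor-Bendixson derivatives of `T ⊆ ℝ`. -/
def cb (T : Set ℝ) : ℕ → Set ℝ
  | 0 => T
  | n + 1 => {t | t ∈ cb T n ∧ t ∈ closure (cb T n ∩ {t}ᶜ)}

/-- `t` is a limit of points of `E` from the left and from the right. -/
def TwoSided (E : Set ℝ) (t : ℝ) : Prop :=
  t ∈ closure (E ∩ Iio t) ∧ t ∈ closure (E ∩ Ioi t)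

lemma cb_antitone (T : Set ℝ) : Antitone (cb T) :=
  antitone_nat_of_succ_le fun _ _ h => h.1

lemma cb_subset (T : Set ℝ) (n : ℕ) : cb T n ⊆ T := cb_antitone T (Nat.zero_le n)

lemma mem_closure_local {E F U : Set ℝ} (hU : IsOpen U) (h : ∀ x ∈ U, x ∈ E ↔ x ∈ F)
    {t : ℝ} (ht : t ∈ U) (V : Set ℝ) : t ∈ closure (E ∩ V) ↔ t ∈ closure (F ∩ V) := by
  have aux (G : Set ℝ) : t ∈ closure (G ∩ V) ↔ t ∈ closure (U ∩ (G ∩ V)) := by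
    refine ⟨fun hG => ?_, fun hG => closure_mono inter_subset_right hG⟩
    exact hU.inter_closure ⟨ht, hG⟩
  rw [aux E, aux F]
  have : U ∩ (E ∩ V) = U ∩ (F ∩ V) := by
    ext x
    have := h x
    simp only [mem_inter_iff]
    tauto
  rw [this]

lemma cb_local {T T' U : Set ℝ} (hU : IsOpen U) (h : ∀ x ∈ U, x ∈ T ↔ x ∈ T') (n : ℕ) :
    ∀ x ∈ U, x ∈ cb T n ↔ x ∈ cb T' n := by
  induction n with
  | zero => exact h
  | succ n ih => exact fun x hx => and_congr (ih x hx) (mem_closure_local hU ih hx _)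

lemma twoSided_local {E F U : Set ℝ} (hU : IsOpen U) (h : ∀ x ∈ U, x ∈ E ↔ x ∈ F)
    {t : ℝ} (ht : t ∈ U) : TwoSided E t ↔ TwoSided F t :=
  and_congr (mem_closure_local hU h ht _) (mem_closure_local hU h ht _)

/-! ### Blowing up a countable compact set -/

/-- The map `φ` is the generalized inverse of `ψ t = t + ∑_{q n < t} 2⁻ⁿ`, where the sequence `q` lists
`T`: each jump of `ψ` is a plateau of `φ`. -/
lemma exists_blowup (T : Set ℝ) (hT : T.Countable) :
    ∃ φ : ℝ → ℝ, Continuous φ ∧ Monotone φ ∧ (∃ C, ∀ x, |φ x - x| ≤ C) ∧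
      ∀ t ∈ T, (φ ⁻¹' {t}).Nontrivial := by
  obtain ⟨q, hq⟩ : ∃ q : ℕ → ℝ, T ⊆ range q := by
    rcases T.eq_empty_or_nonempty with rfl | hne
    · exact ⟨fun _ => 0, empty_subset _⟩
    · obtain ⟨q, rfl⟩ := hT.exists_eq_range hne
      exact ⟨q, le_rfl⟩
  let w : ℝ → ℕ → ℝ := fun t n => if q n < t then (1 / 2 : ℝ) ^ n else 0
  have w0 (t n) : 0 ≤ w t n := by simp only [w]; split_ifs <;> positivity
  have w1 (t n) : w t n ≤ (1 / 2 : ℝ) ^ n := by simp only [w]; split_ifs <;> simp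
  have ws (t) : Summable (w t) := Summable.of_nonneg_of_le (w0 t) (w1 t) summable_geometric_two
  have wmono {s t : ℝ} (hst : s ≤ t) (n : ℕ) : w s n ≤ w t n := by
    by_cases h : q n < s
    · simp [w, h, h.trans_le hst]
    · simpa [w, h] using w0 t n
  let ψ : ℝ → ℝ := fun t => t + ∑' n, w t n
  have ψ_lower (t) : t ≤ ψ t := le_add_of_nonneg_right (tsum_nonneg (w0 t))
  have ψ_upper (t) : ψ t ≤ t + 2 := by
    have := (ws t).tsum_le_tsum (w1 t) summable_geometric_two
    rw [tsum_geometric_two] at this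
    simp only [ψ]; linarith
  have ψ_gap {s t : ℝ} (hst : s ≤ t) : ψ s + (t - s) ≤ ψ t := by
    have := (ws s).tsum_le_tsum (wmono hst) (ws t)
    simp only [ψ]; linarith
  have ψ_jump (n : ℕ) {t : ℝ} (ht : q n < t) : ψ (q n) + (1 / 2) ^ n + (t - q n) ≤ ψ t := by
    have h1 : (∑' m, w (q n) m) + (1 / 2) ^ n ≤ ∑' m, w t m := by
      have hs : Summable (Pi.single n ((1 / 2 : ℝ) ^ n) : ℕ → ℝ) :=
        (hasSum_pi_single n _).summable
      rw [← tsum_pi_single n ((1 / 2 : ℝ) ^ n), ← (ws _).tsum_add hs]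
      refine ((ws _).add hs).tsum_le_tsum (fun m => ?_) (ws t)
      rcases eq_or_ne m n with rfl | hm
      · simp [w, ht]
      · simpa [hm] using wmono ht.le m
    simp only [ψ]; linarith
  let φ : ℝ → ℝ := fun x => sSup {t | ψ t ≤ x}
  have bdd (x) : BddAbove {t | ψ t ≤ x} := ⟨x, fun t ht => (ψ_lower t).trans ht⟩
  have mem2 (x) : x - 2 ∈ {t | ψ t ≤ x} := by
    have := ψ_upper (x - 2)
    simp only [mem_ofPred_eq]; linarith
  have φ_le {x c : ℝ} (h : ∀ t, ψ t ≤ x → t ≤ c) : φ x ≤ c := csSup_le ⟨_, mem2 x⟩ h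
  have le_φ {x t : ℝ} (h : ψ t ≤ x) : t ≤ φ x := le_csSup (bdd x) h
  have φ_mono : Monotone φ := fun x y hxy => φ_le fun t ht => le_φ (ht.trans hxy)
  have φ_lip {x y : ℝ} (hxy : x ≤ y) : φ y ≤ φ x + (y - x) := by
    refine φ_le fun t ht => ?_
    have h1 := ψ_gap (s := t - (y - x)) (t := t) (by linarith)
    have h2 : t - (y - x) ≤ φ x := le_φ (by linarith)
    linarith
  have φ_plateau (n : ℕ) {x : ℝ} (h1 : ψ (q n) ≤ x) (h2 : x ≤ ψ (q n) + (1 / 2) ^ n) :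
      φ x = q n := by
    refine le_antisymm (φ_le fun t ht => ?_) (le_φ h1)
    by_contra! hlt
    have := ψ_jump n hlt
    linarith
  refine ⟨φ, ?_, φ_mono, ⟨2, fun x => ?_⟩, fun t ht => ?_⟩
  · have : LipschitzWith 1 φ := by
      refine LipschitzWith.of_le_add fun x y => ?_
      rw [Real.dist_eq]
      rcases le_total x y with h | h
      · linarith [φ_mono h, abs_nonneg (x - y)]
      · linarith [φ_lip h, le_abs_self (x - y)]
    exact this.continuous
  · rw [abs_le]
    constructor
    · linarith [le_φ (mem2 x)]
    · linarith [φ_le (x := x) (c := x) fun t ht => (ψ_lower t).trans ht]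
  · obtain ⟨n, rfl⟩ := hq ht
    have hp : (0 : ℝ) < (1 / 2) ^ n := by positivity
    refine ⟨ψ (q n), φ_plateau n le_rfl (by linarith), ψ (q n) + (1 / 2) ^ n,
      φ_plateau n (by linarith) le_rfl, by linarith⟩

section Blowup

variable {T : Set ℝ} {φ : ℝ → ℝ}

lemma isCompact_blowup (hT : IsCompact T) (hc : Continuous φ) (hC : ∃ C, ∀ x, |φ x - x| ≤ C) :
    IsCompact (φ ⁻¹' T) := by
  obtain ⟨C, hC⟩ := hC
  obtain ⟨R, hR⟩ := hT.isBounded.subset_closedBall 0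
  refine Metric.isCompact_of_isClosed_isBounded (hT.isClosed.preimage hc)
    ((Metric.isBounded_closedBall (x := (0 : ℝ)) (r := R + C)).subset fun x hx => ?_)
  have h1 := hR hx
  have h2 := hC x
  simp only [Metric.mem_closedBall, Real.dist_eq, sub_zero, abs_le] at *
  constructor <;> linarith

/-- The components of the blow-up are the fibres of `φ`. -/
lemma component_blowup (hT : T.Countable) (hc : Continuous φ) (hm : Monotone φ)
    (p q : ↥(φ ⁻¹' T)) : q ∈ connectedComponent p ↔ φ q = φ p := by
  constructor
  · intro hq
    have hcont : Continuous fun x : ↥(φ ⁻¹' T) => φ x := hc.comp continuous_subtype_val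
    have h1 : IsPreconnected ((fun x : ↥(φ ⁻¹' T) => φ x) '' connectedComponent p) :=
      isPreconnected_connectedComponent.image _ hcont.continuousOn
    have h2 : ((fun x : ↥(φ ⁻¹' T) => φ x) '' connectedComponent p) ⊆ T := by
      rintro _ ⟨x, -, rfl⟩
      exact x.2
    exact hT.isTotallyDisconnected _ h2 h1 (mem_image_of_mem _ hq)
      (mem_image_of_mem _ mem_connectedComponent)
  · intro hq
    have hsub : φ ⁻¹' {φ p} ⊆ φ ⁻¹' T := by
      intro x hx
      have : φ x = φ p := hx
      simpa only [mem_preimage, this] using p.2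
    have hconn : IsPreconnected (φ ⁻¹' {φ p}) :=
      (ordConnected_singleton.preimage_mono hm).isPreconnected
    have h3 : IsPreconnected ((↑) ⁻¹' (φ ⁻¹' {φ p}) : Set ↥(φ ⁻¹' T)) := by
      rw [← IsInducing.subtypeVal.isPreconnected_image]
      simpa [Subtype.image_preimage_coe, inter_eq_right.2 hsub] using hconn
    exact h3.subset_connectedComponent rfl hq

variable (hT : IsCompact T) (hTc : T.Countable) (hc : Continuous φ) (hm : Monotone φ)
  (hC : ∃ C, ∀ x, |φ x - x| ≤ C) (hf : ∀ t ∈ T, (φ ⁻¹' {t}).Nontrivial)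

include hT hc hC hf in
/-- As `φ` restricted to the blow-up is a closed surjection onto `T`, a limit of points of `E ⊆ T`
lifts to a limit of points over `E`. -/
lemma lift_closure {E : Set ℝ} (hE : E ⊆ T) (t : ℝ) :
    (∃ q : ↥(φ ⁻¹' T), φ q = t ∧ q ∈ closure {x : ↥(φ ⁻¹' T) | φ x ∈ E}) ↔ t ∈ closure E := by
  have : CompactSpace ↥(φ ⁻¹' T) := isCompact_iff_compactSpace.1 (isCompact_blowup hT hc hC)
  have hcont : Continuous fun x : ↥(φ ⁻¹' T) => φ x := hc.comp continuous_subtype_val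
  have himg : (fun x : ↥(φ ⁻¹' T) => φ x) '' {x : ↥(φ ⁻¹' T) | φ x ∈ E} = E := by
    ext t
    constructor
    · rintro ⟨x, hx, rfl⟩
      exact hx
    · intro ht
      obtain ⟨x, hx⟩ := (hf t (hE ht)).nonempty
      have hx : φ x = t := hx
      exact ⟨⟨x, by simpa [hx] using hE ht⟩, by simpa [hx] using ht, hx⟩
  have key := hcont.isClosedMap.closure_image_eq_of_continuous hcont
    {x : ↥(φ ⁻¹' T) | φ x ∈ E}
  rw [himg] at key
  rw [key]
  simp only [mem_image]
  exact exists_congr fun q => and_comm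

include hT hTc hc hm hC hf in
lemma compDeriv_blowup (n : ℕ) (p : ↥(φ ⁻¹' T)) :
    p ∈ compDeriv ↥(φ ⁻¹' T) n ↔ φ p ∈ cb T n := by
  induction n generalizing p with
  | zero => exact iff_of_true (mem_univ p) p.2
  | succ n ih =>
    refine and_congr (ih p) ?_
    rw [← lift_closure hT hc hC hf (inter_subset_left.trans (cb_subset T n))]
    refine exists_congr fun q => and_congr (component_blowup hTc hc hm p q) ?_
    have : compDeriv ↥(φ ⁻¹' T) n \ connectedComponent p =
        {x : ↥(φ ⁻¹' T) | φ x ∈ cb T n ∩ {φ p}ᶜ} := by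
      ext x
      simp [ih, component_blowup hTc hc hm]
    rw [this]

include hT hc hm hC hf in
/-- A fibre has two points that are limits of other fibres if and only if its image is a two-sided
limit: the left end of the fibre is the only possible limit from the left, and likewise on the
right. -/
lemma twoSided_blowup {E : Set ℝ} (hE : E ⊆ T) {t : ℝ} (ht : t ∈ T) :
    (∃ q : ↥(φ ⁻¹' T), φ q = t ∧ ∃ r : ↥(φ ⁻¹' T), φ r = t ∧ q ≠ r ∧
      q ∈ closure {x : ↥(φ ⁻¹' T) | φ x ∈ E ∩ {t}ᶜ} ∧
      r ∈ closure {x : ↥(φ ⁻¹' T) | φ x ∈ E ∩ {t}ᶜ}) ↔ TwoSided E t := by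
  have hsplit : {x : ↥(φ ⁻¹' T) | φ x ∈ E ∩ {t}ᶜ} =
      {x : ↥(φ ⁻¹' T) | φ x ∈ E ∩ Iio t} ∪ {x : ↥(φ ⁻¹' T) | φ x ∈ E ∩ Ioi t} := by
    ext x
    simp only [mem_ofPred_eq, mem_union, mem_inter_iff, mem_compl_iff, mem_singleton_iff, mem_Iio,
      mem_Ioi, ← ne_eq, ne_iff_lt_or_gt, and_or_left]
  have hL (q r : ↥(φ ⁻¹' T)) (hr : φ r = t)
      (hq : q ∈ closure {x : ↥(φ ⁻¹' T) | φ x ∈ E ∩ Iio t}) : q ≤ r := by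
    have : closure {x : ↥(φ ⁻¹' T) | φ x ∈ E ∩ Iio t} ⊆ Iic r := by
      refine closure_minimal (fun x hx => ?_) isClosed_Iic
      have h1 : φ x < φ r := by rw [hr]; exact hx.2
      exact (hm.reflect_lt h1).le
    exact this hq
  have hR (q r : ↥(φ ⁻¹' T)) (hr : φ r = t)
      (hq : q ∈ closure {x : ↥(φ ⁻¹' T) | φ x ∈ E ∩ Ioi t}) : r ≤ q := by
    have : closure {x : ↥(φ ⁻¹' T) | φ x ∈ E ∩ Ioi t} ⊆ Ici r := by
      refine closure_minimal (fun x hx => ?_) isClosed_Ici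
      have h1 : φ r < φ x := by rw [hr]; exact hx.2
      exact (hm.reflect_lt h1).le
    exact this hq
  rw [TwoSided, ← lift_closure hT hc hC hf (inter_subset_left.trans hE),
    ← lift_closure hT hc hC hf (inter_subset_left.trans hE), hsplit, closure_union]
  constructor
  · rintro ⟨q, hq, r, hr, hne, hq' | hq', hr' | hr'⟩
    · exact absurd (le_antisymm (hL q r hr hq') (hL r q hq hr')) hne
    · exact ⟨⟨q, hq, hq'⟩, ⟨r, hr, hr'⟩⟩
    · exact ⟨⟨r, hr, hr'⟩, ⟨q, hq, hq'⟩⟩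
    · exact absurd (le_antisymm (hR r q hq hr') (hR q r hr hq')) hne
  · rintro ⟨⟨q, hq, hq'⟩, ⟨r, hr, hr'⟩⟩
    refine ⟨q, hq, r, hr, ?_, Or.inl hq', Or.inr hr'⟩
    rintro rfl
    obtain ⟨x, hx, y, hy, hxy⟩ := hf t ht
    have hx : φ x = t := hx
    have hy : φ y = t := hy
    have eq_q (z : ℝ) (hz : φ z = t) : z = q := by
      have hzA : z ∈ φ ⁻¹' T := by simpa [hz] using ht
      exact le_antisymm (hR q ⟨z, hzA⟩ hz hr') (hL q ⟨z, hzA⟩ hz hq')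
    exact hxy ((eq_q x hx).trans (eq_q y hy).symm)

include hT hTc hc hm hC hf in
lemma typeSet_blowup (n : ℕ) : n ∈ typeSet ↥(φ ⁻¹' T) ↔
    ∃ t ∈ cb T (n + 1), t ∉ cb T (n + 2) ∧ TwoSided (cb T n) t := by
  have aux (p : ↥(φ ⁻¹' T)) : compDeriv ↥(φ ⁻¹' T) n \ connectedComponent p =
      {x : ↥(φ ⁻¹' T) | φ x ∈ cb T n ∩ {φ p}ᶜ} := by
    ext x
    simp [compDeriv_blowup hT hTc hc hm hC hf, component_blowup hTc hc hm]
  simp only [typeSet, mem_ofPred_eq, compDeriv_blowup hT hTc hc hm hC hf,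
    component_blowup hTc hc hm, aux]
  constructor
  · rintro ⟨p, h1, h2, h3⟩
    exact ⟨φ p, h1, h2, (twoSided_blowup hT hc hm hC hf (cb_subset T n) p.2).1 h3⟩
  · rintro ⟨t, h1, h2, h3⟩
    have ht := cb_subset T _ h1
    obtain ⟨x, hx⟩ := (hf t ht).nonempty
    have hx : φ x = t := hx
    subst hx
    exact ⟨⟨x, ht⟩, h1, h2, (twoSided_blowup hT hc hm hC hf (cb_subset T n) ht).2 h3⟩

end Blowup

/-! ### Gluing a sequence of sets at a point -/

/-- The `k`-th member of a sequence of pairwise disjoint open shells shrinking to `p`. -/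
def shell (p δ : ℝ) (k : ℕ) : Set ℝ := {x | δ / (k + 2) < |x - p| ∧ |x - p| < δ / (k + 1)}

/-- The sets `X k`, together with their intended limit `p`. -/
def glue (p : ℝ) (X : ℕ → Set ℝ) : Set ℝ := insert p (⋃ k, X k)

lemma isOpen_shell (p δ : ℝ) (k : ℕ) : IsOpen (shell p δ k) :=
  have h : Continuous fun x : ℝ => |x - p| := by fun_prop
  (isOpen_lt continuous_const h).inter (isOpen_lt h continuous_const)

lemma exists_small (δ : ℝ) {ε : ℝ} (hε : 0 < ε) : ∃ K : ℕ, δ / (K + 1) < ε := by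
  obtain ⟨K, hK⟩ := exists_nat_gt (δ / ε)
  refine ⟨K, ?_⟩
  rw [div_lt_iff₀ hε] at hK
  rw [div_lt_iff₀ (by positivity)]
  nlinarith

section Glue

variable {p δ : ℝ} (hδ : 0 < δ)

include hδ in
lemma shell_bound {j k : ℕ} (hjk : j ≤ k) {x : ℝ} (hx : x ∈ shell p δ k) :
    |x - p| < δ / (j + 1) := by
  refine hx.2.trans_le ?_
  have : (j : ℝ) ≤ k := by exact_mod_cast hjk
  gcongr

include hδ in
lemma shell_disjoint {j k : ℕ} {x : ℝ} (hj : x ∈ shell p δ j) (hk : x ∈ shell p δ k) :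
    j = k := by
  have aux {j k : ℕ} (hj : x ∈ shell p δ j) (hk : x ∈ shell p δ k) : ¬ j < k := by
    intro h
    have h1 := shell_bound hδ (Nat.succ_le_of_lt h) hk
    have h2 := hj.1
    push_cast at h1
    rw [add_assoc, one_add_one_eq_two] at h1
    exact absurd h1 (not_lt.2 h2.le)
  have := aux hj hk
  have := aux hk hj
  omega

include hδ in
lemma center_notMem_shell (k : ℕ) : p ∉ shell p δ k := by
  intro h
  have h1 := h.1
  rw [sub_self, abs_zero] at h1
  have : (0 : ℝ) < δ / (k + 2) := by positivity
  linarith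

include hδ in
lemma center_mem_closure {B : Set ℝ} (h : ∀ K : ℕ, ∃ k ≥ K, (B ∩ shell p δ k).Nonempty) :
    p ∈ closure B := by
  rw [Metric.mem_closure_iff]
  intro ε hε
  obtain ⟨K, hK⟩ := exists_small δ hε
  obtain ⟨k, hk, x, hxB, hx⟩ := h K
  refine ⟨x, hxB, ?_⟩
  rw [dist_comm, Real.dist_eq]
  exact (shell_bound hδ hk hx).trans hK

variable {X : ℕ → Set ℝ} (hX : ∀ k, X k ⊆ shell p δ k)

include hδ hX in
lemma isCompact_glue (hc : ∀ k, IsCompact (X k)) : IsCompact (glue p X) := by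
  have hEq : glue p X =
      ⋂ K : ℕ, (Metric.closedBall p (δ / (K + 1)) ∪ ⋃ k ∈ Finset.range K, X k) := by
    ext x
    simp only [mem_iInter]
    constructor
    · rintro (rfl | hx) K
      · exact Or.inl (Metric.mem_closedBall_self (by positivity))
      · obtain ⟨k, hk⟩ := mem_iUnion.1 hx
        rcases lt_or_ge k K with h | h
        · exact Or.inr (mem_biUnion (Finset.mem_coe.2 (Finset.mem_range.2 h)) hk)
        · left
          rw [Metric.mem_closedBall, Real.dist_eq]
          exact (shell_bound hδ h (hX k hk)).le
    · intro h
      by_cases hx : x ∈ ⋃ k, X k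
      · exact Or.inr hx
      · left
        by_contra hne
        obtain ⟨K, hK⟩ := exists_small δ (abs_pos.2 (sub_ne_zero.2 hne))
        rcases h K with h | h
        · rw [Metric.mem_closedBall, Real.dist_eq] at h
          linarith
        · simp only [mem_iUnion] at h hx
          obtain ⟨k, -, hk⟩ := h
          exact hx ⟨k, hk⟩
  refine Metric.isCompact_of_isClosed_isBounded ?_
    ((Metric.isBounded_closedBall (x := p) (r := δ / ((0 : ℕ) + 1))).subset ?_)
  · rw [hEq]
    exact isClosed_iInter fun K => Metric.isClosed_closedBall.union
      (isClosed_biUnion_finset fun k _ => (hc k).isClosed)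
  · rw [hEq]
    refine (iInter_subset _ 0).trans ?_
    simp

lemma countable_glue (hc : ∀ k, (X k).Countable) : (glue p X).Countable :=
  (countable_iUnion hc).insert p

include hδ hX in
lemma mem_glue_shell (k : ℕ) : ∀ x ∈ shell p δ k, x ∈ glue p X ↔ x ∈ X k := by
  intro x hx
  constructor
  · rintro (rfl | h)
    · exact absurd hx (center_notMem_shell hδ k)
    · obtain ⟨j, hj⟩ := mem_iUnion.1 h
      obtain rfl := shell_disjoint hδ (hX j hj) hx
      exact hj
  · exact fun h => Or.inr (mem_iUnion.2 ⟨k, h⟩)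

include hδ hX in
lemma cb_glue (m k : ℕ) : ∀ x ∈ shell p δ k, x ∈ cb (glue p X) m ↔ x ∈ cb (X k) m :=
  cb_local (isOpen_shell p δ k) (mem_glue_shell hδ hX k) m

include hX in
lemma cb_glue_cases {m : ℕ} {x : ℝ} (hx : x ∈ cb (glue p X) m) : x = p ∨ ∃ k, x ∈ shell p δ k := by
  rcases cb_subset _ _ hx with h | h
  · exact Or.inl h
  · obtain ⟨k, hk⟩ := mem_iUnion.1 h
    exact Or.inr ⟨k, hX k hk⟩

include hδ hX in
lemma center_mem_cb (M : ℕ) (h : ∀ m < M, ∀ K : ℕ, ∃ k ≥ K, (cb (X k) m).Nonempty) :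
    p ∈ cb (glue p X) M := by
  induction M with
  | zero => exact Or.inl rfl
  | succ M ih =>
    refine ⟨ih fun m hm => h m (by omega), center_mem_closure hδ fun K => ?_⟩
    obtain ⟨k, hk, x, hx⟩ := h M (by omega) K
    have hs := hX k (cb_subset _ _ hx)
    refine ⟨k, hk, x, ⟨(cb_glue hδ hX M k x hs).2 hx, ?_⟩, hs⟩
    rintro rfl
    exact center_notMem_shell hδ k hs

end Glue

/-! ### Compact sets realizing a prescribed set of two-sided ranks -/

/-- Every point of `T` of finite rank `m + 1` is a two-sided limit of points of rank at least `m`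
exactly when `m ∈ S`. -/
def Obeys (S : Set ℕ) (T : Set ℝ) : Prop :=
  ∀ m, ∀ t ∈ cb T (m + 1), t ∉ cb T (m + 2) → (TwoSided (cb T m) t ↔ m ∈ S)

/-- Away from the gluing point `Obeys` is inherited from the pieces. -/
lemma obeys_glue {S : Set ℕ} {p δ : ℝ} (hδ : 0 < δ) {X : ℕ → Set ℝ}
    (hX : ∀ k, X k ⊆ shell p δ k) (hS : ∀ k, Obeys S (X k))
    (hp : ∀ m, p ∈ cb (glue p X) (m + 1) → p ∉ cb (glue p X) (m + 2) →
      (TwoSided (cb (glue p X) m) p ↔ m ∈ S)) : Obeys S (glue p X) := by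
  intro m t h1 h2
  rcases cb_glue_cases hX h1 with rfl | ⟨k, hk⟩
  · exact hp m h1 h2
  · rw [cb_glue hδ hX _ k t hk] at h1 h2
    rw [twoSided_local (isOpen_shell p δ k) (cb_glue hδ hX m k) hk]
    exact hS k m t h1 h2

/-- Every open interval contains an `S`-obeying set of rank exactly `n`. In the induction step the
pieces approach the new point alternately from both sides if `n ∈ S`, and from the right only
otherwise. -/
lemma exists_rank (S : Set ℕ) (n : ℕ) : ∀ a b : ℝ, a < b → ∃ T ⊆ Ioo a b, IsCompact T ∧
    T.Countable ∧ (cb T n).Nonempty ∧ cb T (n + 1) = ∅ ∧ Obeys S T := by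
  induction n with
  | zero =>
    intro a b hab
    obtain ⟨c, hc⟩ := exists_between hab
    have h1 : cb {c} 1 = ∅ := by
      ext t
      simp only [cb, mem_ofPred_eq, mem_singleton_iff, mem_empty_iff_false, iff_false, not_and]
      rintro rfl
      simp
    refine ⟨{c}, by simpa using hc, isCompact_singleton, countable_singleton c,
      ⟨c, rfl⟩, h1, fun m t ht _ => ?_⟩
    have := cb_antitone {c} (show 1 ≤ m + 1 by omega) ht
    rw [h1] at this
    exact this.elim
  | succ n ih =>
    intro a b hab
    set p := (a + b) / 2 with hp
    set δ := (b - a) / 2 with hd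
    have hδ : 0 < δ := by linarith
    -- `L k` says that the piece `k` is placed to the left of `p`
    let L : ℕ → Prop := fun k => n ∈ S ∧ Odd k
    have hint (k : ℕ) : δ / (k + 2) < δ / (k + 1) := by gcongr; linarith
    have hpos (k : ℕ) : 0 < δ / ((k : ℝ) + 2) := by positivity
    have hX (k : ℕ) : ∃ T ⊆ shell p δ k, (L k → T ⊆ Iio p) ∧ (¬ L k → T ⊆ Ioi p) ∧ IsCompact T ∧
        T.Countable ∧ (cb T n).Nonempty ∧ cb T (n + 1) = ∅ ∧ Obeys S T := by
      have h1 := hint k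
      have h2 := hpos k
      by_cases hk : L k
      · obtain ⟨T, hT, h⟩ := ih (p - δ / (k + 1)) (p - δ / (k + 2)) (by linarith)
        refine ⟨T, fun x hx => ?_, fun _ x hx => ?_, fun h => absurd hk h, h⟩
        · obtain ⟨h3, h4⟩ := hT hx
          have : |x - p| = p - x := by rw [abs_of_neg (by linarith)]; ring
          simp only [shell, mem_ofPred_eq, this]
          constructor <;> linarith
        · have := (hT hx).2
          simp only [mem_Iio]; linarith
      · obtain ⟨T, hT, h⟩ := ih (p + δ / (k + 2)) (p + δ / (k + 1)) (by linarith)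
        refine ⟨T, fun x hx => ?_, fun h => absurd h hk, fun _ x hx => ?_, h⟩
        · obtain ⟨h3, h4⟩ := hT hx
          have : |x - p| = x - p := abs_of_pos (by linarith)
          simp only [shell, mem_ofPred_eq, this]
          constructor <;> linarith
        · have := (hT hx).1
          simp only [mem_Ioi]; linarith
    choose X hXs hXL hXR hXc hXn hXne hXe hXS using hX
    have hpm : p ∈ cb (glue p X) (n + 1) := center_mem_cb hδ hXs _ fun m hm K =>
      ⟨K, le_rfl, (hXne K).mono (cb_antitone _ (by omega))⟩
    have hempty : cb (glue p X) (n + 2) = ∅ := by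
      have hsub : cb (glue p X) (n + 1) ⊆ {p} := by
        intro t ht
        rcases cb_glue_cases hXs ht with h | ⟨k, hk⟩
        · exact h
        · rw [cb_glue hδ hXs _ k t hk, hXe] at ht
          exact ht.elim
      rw [eq_empty_iff_forall_notMem]
      rintro t ⟨h1, h2⟩
      have htp : t = p := hsub h1
      have : cb (glue p X) (n + 1) ∩ {t}ᶜ = ∅ := by
        rw [eq_empty_iff_forall_notMem]
        exact fun x hx => hx.2 ((hsub hx.1 : x = p).trans htp.symm)
      rw [this, closure_empty] at h2
      exact h2
    refine ⟨glue p X, ?_, isCompact_glue hδ hXs hXc, countable_glue hXn, ⟨p, hpm⟩, hempty,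
      obeys_glue hδ hXs hXS fun m h1 h2 => ?_⟩
    · rintro x (rfl | hx)
      · constructor <;> linarith
      · obtain ⟨k, hk⟩ := mem_iUnion.1 hx
        have := shell_bound hδ (Nat.zero_le k) (hXs k hk)
        rw [Nat.cast_zero, zero_add, div_one, abs_lt] at this
        constructor <;> linarith
    · obtain rfl : m = n := by
        have h3 : ¬ m + 2 ≤ n + 1 := fun h => h2 (cb_antitone _ h hpm)
        have h4 : ¬ n + 2 ≤ m + 1 := fun h => by
          have := cb_antitone _ h h1
          rw [hempty] at this
          exact this
        omega
      have hw (k : ℕ) : ∃ x ∈ X k, x ∈ cb (glue p X) m ∧ x ∈ shell p δ k := by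
        obtain ⟨x, hx⟩ := hXne k
        have hxX := cb_subset _ _ hx
        exact ⟨x, hxX, (cb_glue hδ hXs m k x (hXs k hxX)).2 hx, hXs k hxX⟩
      constructor
      · rintro ⟨h3, -⟩
        by_contra hm
        have : cb (glue p X) m ∩ Iio p = ∅ := by
          rw [eq_empty_iff_forall_notMem]
          rintro x ⟨hx, hxp⟩
          rw [mem_Iio] at hxp
          rcases cb_subset _ _ hx with rfl | hx
          · exact lt_irrefl _ hxp
          · obtain ⟨k, hk⟩ := mem_iUnion.1 hx
            exact lt_asymm hxp (mem_Ioi.1 (hXR k (fun h => hm h.1) hk))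
        rw [this, closure_empty] at h3
        exact h3
      · intro hm
        constructor
        · refine center_mem_closure hδ fun K => ⟨2 * K + 1, by omega, ?_⟩
          obtain ⟨x, hx, h3, h4⟩ := hw (2 * K + 1)
          exact ⟨x, ⟨h3, hXL _ ⟨hm, odd_two_mul_add_one K⟩ hx⟩, h4⟩
        · refine center_mem_closure hδ fun K => ⟨2 * K, by omega, ?_⟩
          obtain ⟨x, hx, h3, h4⟩ := hw (2 * K)
          refine ⟨x, ⟨h3, hXR _ (fun h => ?_) hx⟩, h4⟩
          exact (Nat.not_odd_iff_even.2 (even_two_mul K)) h.2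

/-- Gluing sets of rank `0, 1, 2, …` at a point, which then has infinite rank and imposes no
condition. -/
lemma exists_final (S : Set ℕ) : ∃ T : Set ℝ, IsCompact T ∧ T.Countable ∧ Obeys S T ∧
    ∀ n, ∃ t ∈ cb T (n + 1), t ∉ cb T (n + 2) := by
  have hδ : (0 : ℝ) < 1 := one_pos
  have hX (k : ℕ) : ∃ T ⊆ shell 0 1 k, IsCompact T ∧
      T.Countable ∧ (cb T k).Nonempty ∧ cb T (k + 1) = ∅ ∧ Obeys S T := by
    have h1 : (1 : ℝ) / (k + 2) < 1 / (k + 1) := by gcongr; linarith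
    have h2 : (0 : ℝ) < 1 / (k + 2) := by positivity
    obtain ⟨T, hT, h⟩ := exists_rank S k _ _ h1
    refine ⟨T, fun x hx => ?_, h⟩
    have h3 := hT hx
    have : |x - 0| = x := by rw [sub_zero, abs_of_pos (h2.trans h3.1)]
    simpa only [shell, mem_ofPred_eq, this, mem_Ioo] using h3
  choose X hXs hXc hXn hXne hXe hXS using hX
  have hpm (M : ℕ) : (0 : ℝ) ∈ cb (glue 0 X) M := center_mem_cb hδ hXs _ fun m _ K =>
    ⟨max K m, le_max_left _ _, (hXne _).mono (cb_antitone _ (le_max_right _ _))⟩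
  refine ⟨glue 0 X, isCompact_glue hδ hXs hXc, countable_glue hXn,
    obeys_glue hδ hXs hXS fun m _ h2 => absurd (hpm _) h2, fun n => ?_⟩
  obtain ⟨x, hx⟩ := hXne (n + 1)
  have hs := hXs _ (cb_subset _ _ hx)
  refine ⟨x, (cb_glue hδ hXs _ _ x hs).2 hx, fun h => ?_⟩
  rw [cb_glue hδ hXs _ _ x hs, hXe] at h
  exact h

lemma exists_space (S : Set ℕ) : ∃ A : Set ℝ, IsCompact A ∧
    (∀ x : ↥A, (connectedComponent x).Nontrivial) ∧ typeSet ↥A = S := by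
  obtain ⟨T, hT, hTc, hS, hne⟩ := exists_final S
  obtain ⟨φ, hc, hm, hC, hf⟩ := exists_blowup T hTc
  refine ⟨φ ⁻¹' T, isCompact_blowup hT hc hC, fun x => ?_, ?_⟩
  · obtain ⟨y, hy, z, hz, hyz⟩ := hf (φ x) x.2
    have hy : φ y = φ x := hy
    have hz : φ z = φ x := hz
    have hx : φ x ∈ T := x.2
    exact ⟨⟨y, by rwa [mem_preimage, hy]⟩, (component_blowup hTc hc hm _ _).2 hy,
      ⟨z, by rwa [mem_preimage, hz]⟩, (component_blowup hTc hc hm _ _).2 hz,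
      fun h => hyz (congrArg Subtype.val h)⟩
  · ext n
    rw [typeSet_blowup hT hTc hc hm hC hf]
    constructor
    · rintro ⟨t, h1, h2, h3⟩
      exact (hS n t h1 h2).1 h3
    · intro hn
      obtain ⟨t, h1, h2⟩ := hne n
      exact ⟨t, h1, h2, (hS n t h1 h2).2 hn⟩

end ManyCompact

/-- There exist `𝔠` pairwise non-homeomorphic compact subspaces of `ℝ` in which no connected
component is a singleton. -/
theorem many_compact_subsets_of_real_line :
    ∃ (ι : Type) (A : ι → Set ℝ),
      #ι = 𝔠 ∧
      (∀ i, IsCompact (A i) ∧ ∀ x : ↥(A i), (connectedComponent x).Nontrivial) ∧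
      (∀ i j : ι, i ≠ j → IsEmpty (↥(A i) ≃ₜ ↥(A j))) := by
  choose A hc hn ht using ManyCompact.exists_space
  refine ⟨Set ℕ, A, by simp, fun i => ⟨hc i, hn i⟩, fun i j hij => ⟨fun h => hij ?_⟩⟩
  rw [← ht i, ← ht j, ManyCompact.typeSet_homeo h]
end
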